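/- arXiv:1003.2016 — 3 statements merged into one kernel-verified Lean document; each statement's English description precedes it below -/
import Mathlib

section
/- Let N ≥ 1, let p_1,...,p_N be reals with 0 ≤ p_1 ≤ ... ≤ p_N, let L ≥ 0 and let k, l be real constants with k ≥ 2 and l ≥ 0. Define q_j = min(p_j, L), r_j = k·p_j + l·q_j, s_j(n,i) = p_j·n − q_j·i + c_j for arbitrary reals c_j, and the Type I function f^n_i = max over all (μ_1,...,μ_N) ∈ {0,1}^N of [Σ_{j=1}^N μ_j·s_j(n,i) − Σ_{1≤j<j'≤N} μ_j·μ_{j'}·r_j]. Then for all real n, i: f^n_i + f^{n+k}_{i−l+1} = max( f^{n+k−1}_{i−l} + f^{n+1}_{i+1}, f^{n+k}_{i−l} + f^n_{i+1} − L ). -/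
open Finset

/-- Type I generalized ultradiscrete soliton expression:
`max` over all `(μ_1,...,μ_N) ∈ {0,1}^N` of
`Σ_j μ_j s_j − Σ_{j<j'} μ_j μ_{j'} r_j`. -/
noncomputable def typeIMax (N : ℕ) (s r : Fin N → ℝ) : ℝ :=
  Finset.univ.sup' Finset.univ_nonempty fun μ : Fin N → Bool =>
    (∑ j, (if μ j then (1 : ℝ) else 0) * s j) -
      ∑ j, ∑ j', if j < j' then
        (if μ j then (1 : ℝ) else 0) * (if μ j' then (1 : ℝ) else 0) * r j else 0

/-- Shift inequality. -/
def Sh {E : Type*} [AddCommGroup E] (g : E → ℝ) (w d : E) (W : ℝ) : Prop :=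
  ∀ y, g (y + w + d) + g y ≤ W + g (y + d) + g (y + w)

/-- Adding one (largest) soliton. -/
noncomputable def addSol {E : Type*} [AddCommGroup E] (g : E → ℝ) (σ : E →+ ℝ) (c : ℝ) (K : E) :
    E → ℝ := fun x => max (g x) (σ x + c + g (x - K))

lemma Sh.step {E : Type*} [AddCommGroup E] {g : E → ℝ} {w d K : E} (σ : E →+ ℝ) (c : ℝ)
    (H : Sh g w d (σ w)) (HK : Sh g w K (σ w))
    (hc : ∀ z, g (z + w) + g (z + (K - d)) ≤ g z + g (z + w + (K - d))) :
    Sh (addSol g σ c K) w d (σ w) := by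
  intro y
  have a1 := le_max_left (g (y + d)) (σ (y + d) + c + g (y + d - K))
  have a2 := le_max_right (g (y + d)) (σ (y + d) + c + g (y + d - K))
  have a3 := le_max_left (g (y + w)) (σ (y + w) + c + g (y + w - K))
  have a4 := le_max_right (g (y + w)) (σ (y + w) + c + g (y + w - K))
  have h0 := H y
  have h2 := H (y - K)
  have hk := HK (y - K)
  have ha := hc (y + d - K)
  rw [show y - K + w + d = y + w + d - K by abel, show y - K + d = y + d - K by abel,
    show y - K + w = y + w - K by abel] at h2
  rw [show y - K + w + K = y + w by abel, show y - K + K = y by abel,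
    show y - K + w = y + w - K by abel] at hk
  rw [show y + d - K + w + (K - d) = y + w by abel, show y + d - K + (K - d) = y by abel,
    show y + d - K + w = y + w + d - K by abel] at ha
  simp only [addSol]
  simp only [map_add] at *
  rcases max_choice (g (y + w + d)) (σ y + σ w + σ d + c + g (y + w + d - K)) with h | h <;>
  rcases max_choice (g y) (σ y + c + g (y - K)) with h' | h' <;>
  rw [h, h'] <;> linarith

lemma bil_real (P Q R L s g0 gKe gmK ge gKu gue gK gmu gueK geK : ℝ)
    (hQ : Q = min P L)
    (b1 : g0 + gKe = max (gKu + gue) (gK + ge - L))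
    (b2 : gmK + ge = max (gmu + gueK) (g0 + geK - L))
    (k1 : gue + gmK ≤ P - Q + g0 + gueK)
    (k1' : gKe + gmu ≤ P - Q + gKu + ge)
    (k3 : gK + ge ≤ Q + gKe + g0)
    (k3' : g0 + geK ≤ Q + ge + gmK)
    (d1 : gue + gmu ≤ P - Q + g0 + ge)
    (d2 : gKu + gueK ≤ R - P + ge + g0)
    (i1 : P ≤ L → gKe = gKu) (i2 : P ≤ L → gue = g0) (i3 : P ≤ L → ge = gmu)
    (i4 : P ≤ L → gueK = gmK) :
    max g0 (s + gmK) + max gKe (s + R - Q + ge) =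
      max (max gKu (s + R - P + gmu) + max gue (s + P - Q + gueK))
        (max gK (s + R + g0) + max ge (s - Q + geK) - L) := by
  have l1 := le_max_left (gKu + gue) (gK + ge - L)
  have l2 := le_max_right (gKu + gue) (gK + ge - L)
  have l3 := le_max_left (gmu + gueK) (g0 + geK - L)
  have l4 := le_max_right (gmu + gueK) (g0 + geK - L)
  rw [← b1] at l1 l2
  rw [← b2] at l3 l4
  apply le_antisymm
  · have f1 := le_max_left gKu (s + R - P + gmu)
    have f2 := le_max_right gKu (s + R - P + gmu)
    have f3 := le_max_left gue (s + P - Q + gueK)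
    have f4 := le_max_right gue (s + P - Q + gueK)
    have f5 := le_max_left gK (s + R + g0)
    have f6 := le_max_right gK (s + R + g0)
    have f7 := le_max_left ge (s - Q + geK)
    have f8 := le_max_right ge (s - Q + geK)
    generalize max gKu (s + R - P + gmu) = X1 at *
    generalize max gue (s + P - Q + gueK) = X2 at *
    generalize max gK (s + R + g0) = X3 at *
    generalize max ge (s - Q + geK) = X4 at *
    rw [le_max_iff]
    rcases le_total P L with hPL | hPL
    · rw [min_eq_left hPL] at hQ
      have i1 := i1 hPL
      have i2 := i2 hPL
      have i3 := i3 hPL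
      have i4 := i4 hPL
      left
      rcases max_choice g0 (s + gmK) with h | h <;>
      rcases max_choice gKe (s + R - Q + ge) with h' | h' <;>
      rw [h, h'] <;> linarith
    · rw [min_eq_right hPL] at hQ
      rcases max_choice (gKu + gue) (gK + ge - L) with e1 | e1 <;>
      rcases max_choice (gmu + gueK) (g0 + geK - L) with e2 | e2 <;>
      rw [e1] at b1 <;> rw [e2] at b2 <;>
      rcases max_choice g0 (s + gmK) with h | h <;>
      rcases max_choice gKe (s + R - Q + ge) with h' | h' <;>
      rw [h, h'] <;> first | (left; linarith) | (right; linarith)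
  · have f1 := le_max_left g0 (s + gmK)
    have f2 := le_max_right g0 (s + gmK)
    have f3 := le_max_left gKe (s + R - Q + ge)
    have f4 := le_max_right gKe (s + R - Q + ge)
    generalize max g0 (s + gmK) = X1 at *
    generalize max gKe (s + R - Q + ge) = X2 at *
    have hQP : Q ≤ P := hQ ▸ min_le_left _ _
    have hQL : Q ≤ L := hQ ▸ min_le_right _ _
    apply max_le
    · rcases le_total P L with hPL | hPL
      · rw [min_eq_left hPL] at hQ
        have i1 := i1 hPL
        have i2 := i2 hPL
        have i3 := i3 hPL
        have i4 := i4 hPL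
        rcases max_choice gKu (s + R - P + gmu) with h | h <;>
        rcases max_choice gue (s + P - Q + gueK) with h' | h' <;>
        rw [h, h'] <;> linarith
      · rw [min_eq_right hPL] at hQ
        rcases max_choice gKu (s + R - P + gmu) with h | h <;>
        rcases max_choice gue (s + P - Q + gueK) with h' | h' <;>
        rw [h, h'] <;> linarith
    · rcases max_choice gK (s + R + g0) with h | h <;>
      rcases max_choice ge (s - Q + geK) with h' | h' <;>
      rw [h, h'] <;> linarith

/-- The invariant carried through the induction. -/
structure Good {E : Type*} [AddCommGroup E] (u e K : E) (L P Q R : ℝ) (g : E → ℝ) : Prop where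
  k1 : Sh g (u + e) K (P - Q)
  k2 : Sh g (K - u) K (R - P)
  k3 : Sh g (-e) K Q
  d1 : Sh g (u + e) u (P - Q)
  d2 : Sh g (K - u) (K - u - e) (R - P)
  bil : ∀ x, g x + g (x + K + e) =
    max (g (x + K - u) + g (x + u + e)) (g (x + K) + g (x + e) - L)
  inv : P ≤ L → ∀ x, g (x + u + e) = g x

lemma Good.step {E : Type*} [AddCommGroup E] {u e K : E} {L P Q R : ℝ} {g : E → ℝ}
    (G : Good u e K L P Q R g) (σ : E →+ ℝ) (c : ℝ) (hu : σ u = P) (he : σ e = -Q)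
    (hK : σ K = R) (hQ : Q = min P L) : Good u e K L P Q R (addSol g σ c K) := by
  have triv : ∀ w z : E, g (z + w) + g (z + (K - K)) ≤ g z + g (z + w + (K - K)) := by
    intro w z; simp [add_comm]
  have e1 : P - Q = σ (u + e) := by simp [hu, he]; ring
  have e2 : R - P = σ (K - u) := by simp [hu, hK]
  have e3 : Q = σ (-e) := by simp [he]
  have B : ∀ x, g (x + K - u) + g (x + u + e) ≤ g x + g (x + K + e) := fun x => by
    rw [G.bil]; exact le_max_left _ _
  refine ⟨?_, ?_, ?_, ?_, ?_, ?_, ?_⟩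
  · have := G.k1
    rw [e1] at this ⊢
    exact Sh.step σ c this this (triv _)
  · have := G.k2
    rw [e2] at this ⊢
    exact Sh.step σ c this this (triv _)
  · have := G.k3
    rw [e3] at this ⊢
    exact Sh.step σ c this this (triv _)
  · have h := G.d1
    have h' := G.k1
    rw [e1] at h h' ⊢
    refine Sh.step σ c h h' fun z => ?_
    have := B z
    rw [show z + (K - u) = z + K - u by abel, show z + (u + e) = z + u + e by abel,
      show z + u + e + (K - u) = z + K + e by abel]
    linarith
  · have h := G.d2
    have h' := G.k2
    rw [e2] at h h' ⊢
    refine Sh.step σ c h h' fun z => ?_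
    have := B z
    rw [show z + (K - u) = z + K - u by abel, show z + (K - (K - u - e)) = z + u + e by abel,
      show z + K - u + (K - (K - u - e)) = z + K + e by abel]
    linarith
  · intro x
    have b2 := G.bil (x - K)
    rw [show x - K + K = x by abel, show x - K + u + e = x + u + e - K by abel,
      show x - K + e = x + e - K by abel] at b2
    have k1 := G.k1 (x - K)
    rw [show x - K + (u + e) + K = x + u + e by abel, show x - K + K = x by abel,
      show x - K + (u + e) = x + u + e - K by abel] at k1
    have k1' := G.k1 (x - u)
    rw [show x - u + (u + e) + K = x + K + e by abel, show x - u + K = x + K - u by abel,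
      show x - u + (u + e) = x + e by abel] at k1'
    have k3 := G.k3 (x + e)
    rw [show x + e + -e + K = x + K by abel, show x + e + -e = x by abel,
      show x + e + K = x + K + e by abel] at k3
    have k3' := G.k3 (x + e - K)
    rw [show x + e - K + -e + K = x by abel, show x + e - K + -e = x - K by abel,
      show x + e - K + K = x + e by abel] at k3'
    have d1 := G.d1 (x - u)
    rw [show x - u + (u + e) + u = x + u + e by abel, show x - u + u = x by abel,
      show x - u + (u + e) = x + e by abel] at d1
    have d2 := G.d2 (x + u + e - K)
    rw [show x + u + e - K + (K - u) + (K - u - e) = x + K - u by abel,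
      show x + u + e - K + (K - u - e) = x by abel,
      show x + u + e - K + (K - u) = x + e by abel] at d2
    have main := bil_real P Q R L (σ x + c) (g x) (g (x + K + e)) (g (x - K)) (g (x + e))
      (g (x + K - u)) (g (x + u + e)) (g (x + K)) (g (x - u)) (g (x + u + e - K))
      (g (x + e - K)) hQ (G.bil x) b2 k1 k1' k3 k3' d1 (by linarith)
      (fun h => by rw [← G.inv h (x + K - u)]; congr 1; abel)
      (fun h => G.inv h x)
      (fun h => by rw [← G.inv h (x - u)]; congr 1; abel)
      (fun h => by rw [← G.inv h (x - K)]; congr 1; abel)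
    simp only [addSol, map_add, map_sub, hu, he, hK]
    rw [show x + K + e - K = x + e by abel, show x + K - u - K = x - u by abel,
      show x + K - K = x by abel]
    convert main using 3 <;> ring_nf
  · intro h x
    have hQP : Q = P := by rw [hQ, min_eq_left h]
    have h2 := G.inv h (x - K)
    rw [show x - K + u + e = x + u + e - K by abel] at h2
    simp only [addSol, map_add, hu, he, G.inv h x, h2, hQP]
    ring_nf

lemma Sh.mono {E : Type*} [AddCommGroup E] {g : E → ℝ} {w d : E} {W W' : ℝ}
    (h : Sh g w d W) (hW : W ≤ W') : Sh g w d W' := fun y => by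
  have := h y; linarith

lemma Good.mono {E : Type*} [AddCommGroup E] {u e K : E} {L P Q R P' Q' R' : ℝ} {g : E → ℝ}
    (G : Good u e K L P Q R g) (h0 : P ≤ P') (h1 : P - Q ≤ P' - Q') (h2 : R - P ≤ R' - P')
    (h3 : Q ≤ Q') : Good u e K L P' Q' R' g :=
  ⟨G.k1.mono h1, G.k2.mono h2, G.k3.mono h3, G.d1.mono h1, G.d2.mono h2, G.bil,
    fun h => G.inv (h0.trans h)⟩

lemma typeIMax_zero (s r : Fin 0 → ℝ) : typeIMax 0 s r = 0 := by
  simp [typeIMax]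

/-- The energy of a configuration. -/
noncomputable def energy (N : ℕ) (s r : Fin N → ℝ) (μ : Fin N → Bool) : ℝ :=
  (∑ j, (if μ j then (1 : ℝ) else 0) * s j) -
      ∑ j, ∑ j', if j < j' then
        (if μ j then (1 : ℝ) else 0) * (if μ j' then (1 : ℝ) else 0) * r j else 0

lemma energy_le (N : ℕ) (s r : Fin N → ℝ) (μ : Fin N → Bool) :
    energy N s r μ ≤ typeIMax N s r :=
  Finset.le_sup' (energy N s r) (Finset.mem_univ μ)

lemma typeIMax_le (N : ℕ) (s r : Fin N → ℝ) (a : ℝ) (h : ∀ μ, energy N s r μ ≤ a) :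
    typeIMax N s r ≤ a :=
  Finset.sup'_le _ (energy N s r) fun μ _ => h μ

lemma exists_energy (N : ℕ) (s r : Fin N → ℝ) : ∃ μ, typeIMax N s r = energy N s r μ := by
  obtain ⟨μ, _, h⟩ := Finset.exists_mem_eq_sup' Finset.univ_nonempty (energy N s r)
  exact ⟨μ, h⟩

lemma energy_succ (N : ℕ) (s r : Fin (N + 1) → ℝ) (μ : Fin (N + 1) → Bool) :
    energy (N + 1) s r μ = if μ (Fin.last N) then
      s (Fin.last N) + energy N (fun j => s j.castSucc - r j.castSucc) (fun j => r j.castSucc)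
        (fun j => μ j.castSucc)
      else energy N (fun j => s j.castSucc) (fun j => r j.castSucc) (fun j => μ j.castSucc) := by
  have hl : ∀ j : Fin N, ¬ (Fin.last N < j.castSucc) := fun j => not_lt.2 (Fin.le_last _)
  simp only [energy, Fin.sum_univ_castSucc, Fin.castSucc_lt_castSucc_iff, Fin.castSucc_lt_last,
    hl, lt_irrefl, if_true, if_false, Finset.sum_const_zero, Finset.sum_add_distrib]
  by_cases h : μ (Fin.last N)
  · simp only [h, if_true, mul_sub, Finset.sum_sub_distrib]
    simp only [mul_one]
    ring
  · simp [h]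

lemma typeIMax_succ (N : ℕ) (s r : Fin (N + 1) → ℝ) :
    typeIMax (N + 1) s r = max (typeIMax N (fun j => s j.castSucc) (fun j => r j.castSucc))
      (s (Fin.last N) +
        typeIMax N (fun j => s j.castSucc - r j.castSucc) (fun j => r j.castSucc)) := by
  apply le_antisymm
  · apply typeIMax_le
    intro μ
    rw [energy_succ]
    split_ifs
    · exact le_max_of_le_right (add_le_add_right (energy_le _ _ _ _) _)
    · exact le_max_of_le_left (energy_le _ _ _ _)
  · apply max_le
    · obtain ⟨μ, h⟩ := exists_energy N (fun j => s j.castSucc) (fun j => r j.castSucc)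
      rw [h]
      have := energy_le (N + 1) s r (Fin.snoc (α := fun _ => Bool) μ false)
      rw [energy_succ] at this
      simpa using this
    · obtain ⟨μ, h⟩ := exists_energy N (fun j => s j.castSucc - r j.castSucc)
        (fun j => r j.castSucc)
      rw [h]
      have := energy_le (N + 1) s r (Fin.snoc (α := fun _ => Bool) μ true)
      rw [energy_succ] at this
      simpa using this

/-- The linear form of one soliton. -/
noncomputable def solForm (P Q : ℝ) : ℝ × ℝ →+ ℝ where
  toFun x := P * x.1 - Q * x.2
  map_zero' := by simp
  map_add' x y := by simp; ring

lemma good_all (L k l : ℝ) (hL : 0 ≤ L) (hk : 2 ≤ k) (hl : 0 ≤ l) (N : ℕ) :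
    ∀ (p c : Fin N → ℝ), (∀ j, 0 ≤ p j) → Monotone p → ∀ P : ℝ, 0 ≤ P → (∀ j, p j ≤ P) →
    Good ((1, 0) : ℝ × ℝ) (0, 1) (k, -l) L P (min P L) (k * P + l * min P L)
      (fun x => typeIMax N (fun j => p j * x.1 - min (p j) L * x.2 + c j)
        (fun j => k * p j + l * min (p j) L)) := by
  have mono : ∀ {g : ℝ × ℝ → ℝ} {P P' : ℝ}, P ≤ P' →
      Good ((1, 0) : ℝ × ℝ) (0, 1) (k, -l) L P (min P L) (k * P + l * min P L) g →
      Good ((1, 0) : ℝ × ℝ) (0, 1) (k, -l) L P' (min P' L) (k * P' + l * min P' L) g := by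
    intro g P P' h G
    have hm : min P L ≤ min P' L := min_le_min_right _ h
    refine G.mono h ?_ ?_ hm
    · rcases le_total P L with h1 | h1 <;> rcases le_total P' L with h2 | h2 <;>
        simp only [h1, h2, min_eq_left, min_eq_right] <;> linarith
    · have := mul_le_mul_of_nonneg_left hm hl
      nlinarith
  induction N with
  | zero =>
    intro p c _ _ P hP _
    have hR : P ≤ k * P + l * min P L := by
      have := mul_nonneg hl (le_min hP hL)
      nlinarith
    have hm := min_le_left P L
    have hm0 := le_min hP hL
    simp only [typeIMax_zero]
    constructor <;> simp [Sh, hR, hm, hL, hP]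
  | succ N ih =>
    intro p c hp hmono P hP hle
    refine mono (hle (Fin.last N)) ?_
    have G := ih (fun j => p j.castSucc) (fun j => c j.castSucc) (fun j => hp _)
      (fun a b hab => hmono (Fin.castSucc_le_castSucc_iff.2 hab)) (p (Fin.last N)) (hp _)
      (fun j => hmono (Fin.le_last _))
    have G' := G.step (solForm (p (Fin.last N)) (min (p (Fin.last N)) L)) (c (Fin.last N))
      (by simp [solForm]) (by simp [solForm]) (by simp [solForm]; ring) rfl
    convert G' using 1
    funext x
    rw [typeIMax_succ]
    simp only [addSol, solForm, AddMonoidHom.coe_mk, ZeroHom.coe_mk, Prod.fst_sub, Prod.snd_sub]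
    congr 4
    funext j
    ring

theorem ukdv_type_bilinear_typeI (N : ℕ) (hN : 1 ≤ N) (p c : Fin N → ℝ)
    (L k l : ℝ) (hp0 : ∀ j, 0 ≤ p j) (hpmono : Monotone p)
    (hL : 0 ≤ L) (hk : 2 ≤ k) (hl : 0 ≤ l)
    (q r : Fin N → ℝ)
    (hq : ∀ j, q j = min (p j) L)
    (hr : ∀ j, r j = k * p j + l * q j)
    (f : ℝ → ℝ → ℝ)
    (hf : ∀ n i : ℝ, f n i = typeIMax N (fun j => p j * n - q j * i + c j) r) :
    ∀ n i : ℝ,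
      f n i + f (n + k) (i - l + 1) =
        max (f (n + k - 1) (i - l) + f (n + 1) (i + 1))
            (f (n + k) (i - l) + f n (i + 1) - L) := by
  intro n i
  have G := (good_all L k l hL hk hl N p c hp0 hpmono (p ⟨N - 1, by omega⟩) (hp0 _)
    (fun j => hpmono (by rw [Fin.le_def]; simp; omega))).bil (n, i)
  obtain rfl : q = fun j => min (p j) L := funext hq
  obtain rfl : r = fun j => k * p j + l * min (p j) L := funext hr
  simp only [hf]
  simpa [sub_eq_add_neg] using G
end

section
/- Let N ≥ 1, let p_1,...,p_N be reals with 0 ≤ p_1 ≤ ... ≤ p_N, let L ≥ 0 and let k, l be real constants with k ≥ 2 and l ≥ 0. Define q_j = min(p_j, L), r_j = k·p_j + l·q_j, s_j(n,i) = p_j·n − q_j·i + c_j for arbitrary reals c_j, and the Type II function f̃^n_i equal to the ultradiscrete permanent of the N×N matrix whose (j,m) entry (m = 1,...,N) is |s_j(n,i) + (−N−1+2m)·r_j/2|. Then for all real n, i: f̃^n_i + f̃^{n+k}_{i−l+1} = max( f̃^{n+k−1}_{i−l} + f̃^{n+1}_{i+1}, f̃^{n+k}_{i−l} + f̃^n_{i+1}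 − 2L ). -/
open Finset

/-- The ultradiscrete permanent of an `N × N` real matrix:
the maximum over all permutations `π` of `Σ_j a j (π j)`. -/
noncomputable def uperm (N : ℕ) (a : Fin N → Fin N → ℝ) : ℝ :=
  Finset.univ.sup' Finset.univ_nonempty fun π : Equiv.Perm (Fin N) => ∑ j, a j (π j)

/-- Suffix sums. -/
def sfx (N : ℕ) (b : ℕ → ℤ) (m : ℕ) : ℤ := ∑ j ∈ range N, if m ≤ j then b j else 0

lemma layer_eq (N : ℕ) (D : ℕ → ℝ) (D0 : D 0 = 0) (j : ℕ) (hj : j < N) :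
    D (j + 1) = ∑ m ∈ range N, if m ≤ j then D (m + 1) - D m else 0 := by
  rw [← Finset.sum_filter]
  have : (range N).filter (fun m => m ≤ j) = range (j + 1) := by
    ext m; simp; omega
  rw [this, Finset.sum_range_sub, D0, sub_zero]

lemma abel_sfx (N : ℕ) (D : ℕ → ℝ) (D0 : D 0 = 0) (b : ℕ → ℤ) :
    ∑ j ∈ range N, (b j : ℝ) * D (j + 1)
      = ∑ m ∈ range N, (D (m + 1) - D m) * (sfx N b m : ℝ) := by
  have h1 : ∑ j ∈ range N, (b j : ℝ) * D (j + 1)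
      = ∑ j ∈ range N, ∑ m ∈ range N, (b j : ℝ) * (if m ≤ j then D (m + 1) - D m else 0) := by
    refine Finset.sum_congr rfl fun j hj => ?_
    rw [layer_eq N D D0 j (Finset.mem_range.1 hj), Finset.mul_sum]
  rw [h1, Finset.sum_comm]
  refine Finset.sum_congr rfl fun m _ => ?_
  rw [sfx, Int.cast_sum, Finset.mul_sum]
  refine Finset.sum_congr rfl fun j _ => ?_
  split_ifs <;> simp [mul_comm]

lemma quad_sfx (N : ℕ) (R : ℕ → ℝ) (R0 : R 0 = 0) (b : ℕ → ℤ) :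
    ∑ i ∈ range N, ∑ j ∈ range N, (b i : ℝ) * b j * R (min i j + 1)
      = ∑ m ∈ range N, (R (m + 1) - R m) * (sfx N b m : ℝ) ^ 2 := by
  have h1 : ∑ i ∈ range N, ∑ j ∈ range N, (b i : ℝ) * b j * R (min i j + 1)
      = ∑ i ∈ range N, ∑ j ∈ range N, ∑ m ∈ range N,
        (R (m + 1) - R m) * ((((if m ≤ i then b i else 0 : ℤ)) : ℝ) *
          ((if m ≤ j then b j else 0 : ℤ) : ℝ)) := by
    refine Finset.sum_congr rfl fun i hi => Finset.sum_congr rfl fun j hj => ?_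
    rw [layer_eq N R R0 (min i j) (by have := Finset.mem_range.1 hi; omega), Finset.mul_sum]
    refine Finset.sum_congr rfl fun m _ => ?_
    by_cases h : m ≤ i <;> by_cases h' : m ≤ j <;> simp [h, h', mul_comm]
  have h2 : ∀ m, (R (m + 1) - R m) * (sfx N b m : ℝ) ^ 2
      = ∑ i ∈ range N, ∑ j ∈ range N,
        (R (m + 1) - R m) * ((((if m ≤ i then b i else 0 : ℤ)) : ℝ) *
          ((if m ≤ j then b j else 0 : ℤ) : ℝ)) := by
    intro m
    rw [sfx, Int.cast_sum, sq, Finset.sum_mul_sum, Finset.mul_sum]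
    simp_rw [Finset.mul_sum]
  simp_rw [h2]
  rw [h1, Finset.sum_comm (s := range N) (t := range N) (f := fun m i => ∑ j ∈ range N,
        (R (m + 1) - R m) * ((((if m ≤ i then b i else 0 : ℤ)) : ℝ) *
          ((if m ≤ j then b j else 0 : ℤ) : ℝ)))]
  exact Finset.sum_congr rfl fun i _ => Finset.sum_comm

/-- Sign of the difference of two naturals. -/
def sg (v u : ℕ) : ℝ := if u < v then 1 else if v < u then -1 else 0

lemma sg_anti (v u : ℕ) : sg v u = - sg u v := by
  unfold sg; split_ifs <;> first | omega | norm_num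

lemma sum_sg (N v : ℕ) : ∑ u ∈ range N, sg v u = if v < N then 2 * (v : ℝ) - N + 1 else N := by
  induction N with
  | zero => simp
  | succ n ih =>
    rw [Finset.sum_range_succ, ih]
    unfold sg
    rcases lt_trichotomy v n with h | h | h
    · have h1 : ¬ n < v := by omega
      have h2 : v < n + 1 := by omega
      simp [h, h1, h2]; ring
    · subst h; simp; ring
    · have h1 : ¬ v < n := by omega
      have h2 : ¬ v < n + 1 := by omega
      simp [h, h1, h2]

lemma perm_sum (N : ℕ) (x : Fin N → ℝ) (π : Equiv.Perm (Fin N)) :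
    ∑ j, x j * ((2 * ((π j : ℕ) : ℝ) - N + 1) / 2)
      = 1 / 4 * ∑ j, ∑ i, (x j - x i) * sg (π j) (π i) := by
  have h1 : ∀ j, (2 * ((π j : ℕ) : ℝ) - N + 1) = ∑ i, sg (π j) (π i) := by
    intro j
    rw [Equiv.sum_comp π (fun i => sg (π j) (i : ℕ)),
      Fin.sum_univ_eq_sum_range (fun i => sg (π j) i) N, sum_sg]
    simp
  have h2 : ∑ j, ∑ i, x i * sg (π j) (π i) = - ∑ j, ∑ i, x j * sg (π j) (π i) := by
    rw [Finset.sum_comm, ← Finset.sum_neg_distrib]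
    refine Finset.sum_congr rfl fun j _ => ?_
    rw [← Finset.sum_neg_distrib]
    refine Finset.sum_congr rfl fun i _ => ?_
    rw [sg_anti]; ring
  have h3 : ∑ j, ∑ i, (x j - x i) * sg (π j) (π i) = 2 * ∑ j, ∑ i, x j * sg (π j) (π i) := by
    simp_rw [sub_mul, Finset.sum_sub_distrib]
    rw [h2]; ring
  rw [h3, Finset.mul_sum, Finset.mul_sum]
  refine Finset.sum_congr rfl fun j _ => ?_
  rw [h1, ← Finset.mul_sum]; ring

lemma perm_le (N : ℕ) (x : Fin N → ℝ) (π : Equiv.Perm (Fin N)) :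
    ∑ j, x j * ((2 * ((π j : ℕ) : ℝ) - N + 1) / 2) ≤ 1 / 4 * ∑ j, ∑ i, |x j - x i| := by
  rw [perm_sum]
  refine mul_le_mul_of_nonneg_left ?_ (by norm_num)
  refine Finset.sum_le_sum fun j _ => Finset.sum_le_sum fun i _ => ?_
  have h1 := le_abs_self (x j - x i)
  have h2 := neg_abs_le (x j - x i)
  have h3 := abs_nonneg (x j - x i)
  unfold sg; split_ifs <;> linarith

lemma perm_ex (N : ℕ) (x : Fin N → ℝ) : ∃ π : Equiv.Perm (Fin N),
    ∑ j, x j * ((2 * ((π j : ℕ) : ℝ) - N + 1) / 2) = 1 / 4 * ∑ j, ∑ i, |x j - x i| := by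
  refine ⟨(Tuple.sort x)⁻¹, ?_⟩
  rw [perm_sum]
  congr 1
  refine Finset.sum_congr rfl fun j _ => Finset.sum_congr rfl fun i _ => ?_
  have hm : ∀ a b : Fin N, (Tuple.sort x)⁻¹ a < (Tuple.sort x)⁻¹ b → x a ≤ x b := by
    intro a b h
    have := Tuple.monotone_sort x h.le
    simpa using this
  unfold sg
  split_ifs with h h'
  · have := hm i j h
    rw [abs_of_nonneg] <;> linarith
  · have := hm j i h'
    rw [abs_of_nonpos] <;> linarith
  · have : (Tuple.sort x)⁻¹ i = (Tuple.sort x)⁻¹ j := by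
      apply Fin.ext; omega
    have := (Tuple.sort x)⁻¹.injective this
    subst this; simp

/-- Constant term. -/
noncomputable def KK (N : ℕ) (R : ℕ → ℝ) : ℝ :=
  1 / 4 * ∑ j ∈ range N, ∑ i ∈ range N, R (max j i + 1)

/-- The quadratic objective. -/
noncomputable def JJ (N : ℕ) (R s : ℕ → ℝ) (ε : ℕ → ℤ) : ℝ :=
  ∑ j ∈ range N, (ε j : ℝ) * s j - 1 / 4 * ∑ m ∈ range N, (R (m + 1) - R m) * (sfx N ε m : ℝ) ^ 2

/-- Sign vectors. -/
def IsSgn (ε : ℕ → ℤ) : Prop := ∀ j, ε j = 1 ∨ ε j = -1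

lemma abs_pair (R : ℕ → ℝ) (hR : Monotone R) (R0 : R 0 = 0) (ε : ℕ → ℤ) (hε : IsSgn ε) (i j : ℕ) :
    |(ε j : ℝ) * R (j + 1) - ε i * R (i + 1)|
      = R (max j i + 1) - (ε j : ℝ) * ε i * R (min j i + 1) := by
  have hj : 0 ≤ R (j + 1) := R0 ▸ hR (Nat.zero_le _)
  have hi : 0 ≤ R (i + 1) := R0 ▸ hR (Nat.zero_le _)
  rcases le_total i j with h | h
  · have hij : R (i + 1) ≤ R (j + 1) := hR (by omega)
    rw [max_eq_left h, min_eq_right h]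
    rcases hε i with e | e <;> rcases hε j with e' | e' <;> rw [e, e'] <;> push_cast <;>
      first
      | (rw [abs_of_nonneg (by linarith)]; ring)
      | (rw [abs_of_nonpos (by linarith)]; ring)
  · have hij : R (j + 1) ≤ R (i + 1) := hR (by omega)
    rw [max_eq_right h, min_eq_left h]
    rcases hε i with e | e <;> rcases hε j with e' | e' <;> rw [e, e'] <;> push_cast <;>
      first
      | (rw [abs_of_nonneg (by linarith)]; ring)
      | (rw [abs_of_nonpos (by linarith)]; ring)

lemma KJ (N : ℕ) (R : ℕ → ℝ) (hR : Monotone R) (R0 : R 0 = 0) (s : ℕ → ℝ) (ε : ℕ → ℤ)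
    (hε : IsSgn ε) :
    KK N R + JJ N R s ε = ∑ j : Fin N, (ε j : ℝ) * s j +
      1 / 4 * ∑ j : Fin N, ∑ i : Fin N, |(ε j : ℝ) * R (j + 1) - ε i * R (i + 1)| := by
  simp_rw [abs_pair R hR R0 ε hε]
  have h : ∀ j : ℕ, ∑ i : Fin N, (R (max j i + 1) - (ε j : ℝ) * ε i * R (min j i + 1))
    = ∑ i ∈ range N, (R (max j i + 1) - (ε j : ℝ) * ε i * R (min j i + 1)) := fun j =>
    Fin.sum_univ_eq_sum_range (fun i => (R (max j i + 1) - (ε j : ℝ) * ε i * R (min j i + 1))) N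
  simp_rw [h]
  rw [Fin.sum_univ_eq_sum_range (fun j => (ε j : ℝ) * s j),
    Fin.sum_univ_eq_sum_range (fun j => ∑ i ∈ range N,
      (R (max j i + 1) - (ε j : ℝ) * ε i * R (min j i + 1)))]
  simp_rw [Finset.sum_sub_distrib]
  rw [quad_sfx N R R0, KK, JJ]
  ring

lemma uperm_ge (N : ℕ) (R : ℕ → ℝ) (hR : Monotone R) (R0 : R 0 = 0) (s : ℕ → ℝ) (ε : ℕ → ℤ)
    (hε : IsSgn ε) :
    KK N R + JJ N R s ε ≤ uperm N fun j m =>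
      |s j + (2 * ((m : ℕ) : ℝ) - (N : ℝ) + 1) * R (j + 1) / 2| := by
  rw [KJ N R hR R0 s ε hε]
  obtain ⟨π, hπ⟩ := perm_ex N (fun j => (ε j : ℝ) * R (j + 1))
  rw [← hπ, ← Finset.sum_add_distrib]
  refine le_trans ?_ (Finset.le_sup' _ (Finset.mem_univ π))
  refine Finset.sum_le_sum fun j _ => ?_
  rcases hε j with e | e <;> rw [e] <;> push_cast
  · refine le_trans (le_of_eq ?_) (le_abs_self _); ring
  · refine le_trans (le_of_eq ?_) (neg_le_abs _); ring

lemma uperm_ex (N : ℕ) (R : ℕ → ℝ) (hR : Monotone R) (R0 : R 0 = 0) (s : ℕ → ℝ) :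
    ∃ ε, IsSgn ε ∧ (uperm N fun j m =>
      |s j + (2 * ((m : ℕ) : ℝ) - (N : ℝ) + 1) * R (j + 1) / 2|) ≤ KK N R + JJ N R s ε := by
  obtain ⟨π, -, hπ⟩ := Finset.exists_mem_eq_sup' (Finset.univ_nonempty (α := Equiv.Perm (Fin N)))
    (fun π : Equiv.Perm (Fin N) => ∑ j : Fin N,
      |s j + (2 * ((π j : ℕ) : ℝ) - (N : ℝ) + 1) * R (j + 1) / 2|)
  let ε : ℕ → ℤ := fun j => if h : j < N then
    (if 0 ≤ s j + (2 * ((π ⟨j, h⟩ : ℕ) : ℝ) - (N : ℝ) + 1) * R (j + 1) / 2 then 1 else -1) else 1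
  have hε : IsSgn ε := by
    intro j
    simp only [ε]; split_ifs <;> simp
  refine ⟨ε, hε, ?_⟩
  rw [KJ N R hR R0 s ε hε]
  unfold uperm
  rw [hπ]
  refine le_trans ?_ (add_le_add_right (perm_le N (fun j => (ε j : ℝ) * R (j + 1)) π) _)
  rw [← Finset.sum_add_distrib]
  refine Finset.sum_le_sum fun j _ => le_of_eq ?_
  simp only [ε, j.2, dif_pos]
  split_ifs with h
  · rw [abs_of_nonneg h]; push_cast; ring
  · rw [abs_of_neg (not_le.1 h)]; push_cast; ring

/-- Number of nonzero entries from position `m` on. -/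
def cnt (N : ℕ) (b : ℕ → ℤ) (m : ℕ) : ℕ := ∑ j ∈ range N, if m ≤ j ∧ b j ≠ 0 then 1 else 0

lemma cnt_succ (N : ℕ) (b : ℕ → ℤ) (m : ℕ) (hm : m < N) :
    cnt N b m = cnt N b (m + 1) + if b m ≠ 0 then 1 else 0 := by
  unfold cnt
  have : (if b m ≠ 0 then 1 else 0) = ∑ j ∈ range N, if j = m then (if b m ≠ 0 then 1 else 0) else 0 := by
    rw [Finset.sum_ite_eq']; simp [hm]
  rw [this, ← Finset.sum_add_distrib]
  refine Finset.sum_congr rfl fun j _ => ?_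
  rcases lt_trichotomy j m with h | h | h
  · have h1 : ¬ m ≤ j := by omega
    have h2 : ¬ m + 1 ≤ j := by omega
    have h3 : j ≠ m := by omega
    simp [h1, h2, h3]
  · subst h; simp
  · have h1 : m ≤ j := by omega
    have h2 : m + 1 ≤ j := by omega
    have h3 : j ≠ m := by omega
    simp [h1, h2, h3]

lemma cnt_zero (N : ℕ) (b : ℕ → ℤ) (m j : ℕ) (h : cnt N b m = 0) (hj : j < N) (hb : b j ≠ 0) :
    j < m := by
  by_contra hc
  unfold cnt at h
  rw [Finset.sum_eq_zero_iff] at h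
  have := h j (Finset.mem_range.2 hj)
  simp [hb] at this
  omega

lemma cnt_top (N : ℕ) (b : ℕ → ℤ) : cnt N b N = 0 := by
  unfold cnt
  refine Finset.sum_eq_zero fun j hj => ?_
  have := Finset.mem_range.1 hj
  rw [if_neg]; omega

lemma cnt_parity (N : ℕ) (b : ℕ → ℤ) (hb : ∀ j, b j = 0 ∨ b j = 1 ∨ b j = -1) (m : ℕ) :
    sfx N b m % 2 = (cnt N b m : ℤ) % 2 := by
  unfold sfx cnt
  push_cast
  rw [Finset.sum_int_mod, Finset.sum_int_mod (f := fun j => if m ≤ j ∧ b j ≠ 0 then (1:ℤ) else 0)]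
  congr 1
  refine Finset.sum_congr rfl fun j _ => ?_
  rcases hb j with e | e | e <;> by_cases h : m ≤ j <;> simp [e, h]

lemma sfx_tele (N : ℕ) (h : ℕ → ℤ) (hN : h N = 0) (m : ℕ) (hm : m ≤ N) :
    sfx N (fun j => h j - h (j + 1)) m = h m := by
  unfold sfx
  rw [← Finset.sum_filter]
  have : (range N).filter (fun j => m ≤ j) = Finset.Ico m N := by
    ext j; simp; omega
  rw [this]
  have h2 := Finset.sum_Ico_sub (f := h) hm
  have h3 : ∑ j ∈ Finset.Ico m N, (h j - h (j + 1)) = - ∑ j ∈ Finset.Ico m N, (h (j+1) - h j) := by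
    rw [← Finset.sum_neg_distrib]; exact Finset.sum_congr rfl fun j _ => by ring
  rw [h3, h2, hN]; ring

lemma sfx_add (N : ℕ) (a b : ℕ → ℤ) (m : ℕ) :
    sfx N (fun j => a j + b j) m = sfx N a m + sfx N b m := by
  unfold sfx
  rw [← Finset.sum_add_distrib]
  refine Finset.sum_congr rfl fun j _ => ?_
  split_ifs <;> simp

lemma sfx_sub (N : ℕ) (a b : ℕ → ℤ) (m : ℕ) :
    sfx N (fun j => a j - b j) m = sfx N a m - sfx N b m := by
  unfold sfx
  rw [← Finset.sum_sub_distrib]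
  refine Finset.sum_congr rfl fun j _ => ?_
  split_ifs <;> simp

/-- Value of a pair in the center / difference coordinates. -/
lemma JJ_pair (N : ℕ) (R D : ℕ → ℝ) (D0 : D 0 = 0) (s t : ℕ → ℝ)
    (hD : ∀ j < N, t j - s j = D (j + 1)) (a b : ℕ → ℤ) :
    JJ N R s (fun j => a j - b j) + JJ N R t (fun j => a j + b j)
      = ∑ j ∈ range N, (a j : ℝ) * (s j + t j)
        - 1 / 2 * ∑ m ∈ range N, (R (m + 1) - R m) * (sfx N a m : ℝ) ^ 2
        + ∑ m ∈ range N, ((D (m + 1) - D m) * (sfx N b m : ℝ)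
          - (R (m + 1) - R m) * (sfx N b m : ℝ) ^ 2 / 2) := by
  unfold JJ
  simp_rw [sfx_add, sfx_sub]
  rw [Finset.sum_sub_distrib, ← abel_sfx N D D0 b, Finset.mul_sum, Finset.mul_sum, Finset.mul_sum]
  have e1 : ∑ j ∈ range N, ((a j - b j : ℤ) : ℝ) * s j + ∑ j ∈ range N, ((a j + b j : ℤ) : ℝ) * t j
     = ∑ j ∈ range N, (a j : ℝ) * (s j + t j) + ∑ j ∈ range N, (b j : ℝ) * D (j + 1) := by
    rw [← Finset.sum_add_distrib, ← Finset.sum_add_distrib]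
    refine Finset.sum_congr rfl fun j hj => ?_
    rw [← hD j (Finset.mem_range.1 hj)]; push_cast; ring
  have e2 : ∑ m ∈ range N, 1 / 4 * ((R (m + 1) - R m) * ((sfx N a m - sfx N b m : ℤ) : ℝ) ^ 2)
      + ∑ m ∈ range N, 1 / 4 * ((R (m + 1) - R m) * ((sfx N a m + sfx N b m : ℤ) : ℝ) ^ 2)
      = ∑ m ∈ range N, 1 / 2 * ((R (m + 1) - R m) * (sfx N a m : ℝ) ^ 2)
       + ∑ m ∈ range N, (R (m + 1) - R m) * (sfx N b m : ℝ) ^ 2 / 2 := by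
    rw [← Finset.sum_add_distrib, ← Finset.sum_add_distrib]
    refine Finset.sum_congr rfl fun j _ => ?_
    push_cast; ring
  linarith

lemma split_signs (σ τ : ℕ → ℤ) (hσ : IsSgn σ) (hτ : IsSgn τ) : ∃ a b : ℕ → ℤ,
    (σ = fun j => a j - b j) ∧ (τ = fun j => a j + b j) ∧
    ∀ j, (b j = 0 ∧ (a j = 1 ∨ a j = -1)) ∨ (a j = 0 ∧ (b j = 1 ∨ b j = -1)) := by
  refine ⟨fun j => (σ j + τ j) / 2, fun j => (τ j - σ j) / 2, ?_, ?_, ?_⟩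
  · funext j; rcases hσ j with e | e <;> rcases hτ j with e' | e' <;> simp [e, e']
  · funext j; rcases hσ j with e | e <;> rcases hτ j with e' | e' <;> simp [e, e']
  · intro j; rcases hσ j with e | e <;> rcases hτ j with e' | e' <;> simp [e, e']

lemma exchange (N : ℕ) (R D D' : ℕ → ℝ) (D0 : D 0 = 0) (D0' : D' 0 = 0) (s t s' t' : ℕ → ℝ)
    (hD : ∀ j < N, t j - s j = D (j + 1)) (hD' : ∀ j < N, t' j - s' j = D' (j + 1))
    (hst : ∀ j < N, s j + t j = s' j + t' j)
    (a b : ℕ → ℤ)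
    (hab : ∀ j, (b j = 0 ∧ (a j = 1 ∨ a j = -1)) ∨ (a j = 0 ∧ (b j = 1 ∨ b j = -1)))
    (g : ℕ → ℤ) (g0 : g 0 = 0) (hg : ∀ n, g (n + 1) - g n = 1 ∨ g (n + 1) - g n = -1)
    (κ : ℕ → ℝ)
    (hlay : ∀ m < N, ∀ B : ℤ, B % 2 = (cnt N b m : ℤ) % 2 →
      (D (m + 1) - D m) * (B : ℝ) - (R (m + 1) - R m) * (B : ℝ) ^ 2 / 2 ≤
      (D' (m + 1) - D' m) * (g (cnt N b m) : ℝ)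
        - (R (m + 1) - R m) * (g (cnt N b m) : ℝ) ^ 2 / 2 + κ m) :
    ∃ σ' τ', IsSgn σ' ∧ IsSgn τ' ∧
      JJ N R s (fun j => a j - b j) + JJ N R t (fun j => a j + b j) ≤
        JJ N R s' σ' + JJ N R t' τ' + ∑ m ∈ range N, κ m := by
  let h : ℕ → ℤ := fun j => if j < N then g (cnt N b j) else 0
  let b0 : ℕ → ℤ := fun j => h j - h (j + 1)
  let b' : ℕ → ℤ := fun j => if j < N then h j - h (j + 1) else b j
  have hs : ∀ m < N, sfx N b' m = g (cnt N b m) := by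
    intro m hm
    have e : sfx N b' m = sfx N b0 m := by
      unfold sfx
      refine Finset.sum_congr rfl fun j hj => ?_
      simp [b', b0, Finset.mem_range.1 hj]
    rw [e, sfx_tele N h (by simp [h]) m hm.le]
    simp [h, hm]
  have hh : ∀ m < N, h (m + 1) = g (cnt N b (m + 1)) := by
    intro m hm
    simp only [h]
    split_ifs with hc
    · rfl
    · have : m + 1 = N := by omega
      rw [this, cnt_top, g0]
  have hb' : ∀ j, (b' j = 0 ∧ (a j = 1 ∨ a j = -1)) ∨ (a j = 0 ∧ (b' j = 1 ∨ b' j = -1)) := by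
    intro j
    by_cases hj : j < N
    · have e : b' j = g (cnt N b j) - g (cnt N b (j + 1)) := by
        simp only [b', hj, if_true]
        rw [hh j hj]; simp [h, hj]
      rw [cnt_succ N b j hj] at e
      rcases hab j with ⟨h1, h2⟩ | ⟨h1, h2⟩
      · left; refine ⟨?_, h2⟩
        rw [e]; simp [h1]
      · right; refine ⟨h1, ?_⟩
        have : b j ≠ 0 := by omega
        rw [if_pos this] at e
        rw [e]; exact hg _
    · simp only [b', hj, if_false]; exact hab j
  refine ⟨fun j => a j - b' j, fun j => a j + b' j, ?_, ?_, ?_⟩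
  · intro j; have := hb' j; dsimp only; omega
  · intro j; have := hb' j; dsimp only; omega
  · rw [JJ_pair N R D D0 s t hD, JJ_pair N R D' D0' s' t' hD']
    have e1 : ∑ j ∈ range N, (a j : ℝ) * (s j + t j) = ∑ j ∈ range N, (a j : ℝ) * (s' j + t' j) :=
      Finset.sum_congr rfl fun j hj => by rw [hst j (Finset.mem_range.1 hj)]
    have e2 : ∑ m ∈ range N, ((D (m + 1) - D m) * (sfx N b m : ℝ)
          - (R (m + 1) - R m) * (sfx N b m : ℝ) ^ 2 / 2) ≤
        ∑ m ∈ range N, ((D' (m + 1) - D' m) * (sfx N b' m : ℝ)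
          - (R (m + 1) - R m) * (sfx N b' m : ℝ) ^ 2 / 2) + ∑ m ∈ range N, κ m := by
      rw [← Finset.sum_add_distrib]
      refine Finset.sum_le_sum fun m hm => ?_
      have hm := Finset.mem_range.1 hm
      rw [hs m hm]
      refine hlay m hm _ (cnt_parity N b (fun j => ?_) m)
      have := hab j; omega
    linarith

/-- The alternating profile. -/
def g1 (n : ℕ) : ℤ := (n : ℤ) % 2
/-- The shifted alternating profile. -/
def g2 (n : ℕ) : ℤ := if n = 0 then 0 else if n % 2 = 1 then 1 else 2

lemma g1_step (n : ℕ) : g1 (n + 1) - g1 n = 1 ∨ g1 (n + 1) - g1 n = -1 := by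
  unfold g1; omega

lemma g2_step (n : ℕ) : g2 (n + 1) - g2 n = 1 ∨ g2 (n + 1) - g2 n = -1 := by
  unfold g2
  rw [if_neg (Nat.succ_ne_zero n)]
  by_cases h0 : n = 0
  · subst h0; simp
  · rw [if_neg h0]
    rcases Nat.mod_two_eq_zero_or_one n with h | h
    · have h' : (n + 1) % 2 = 1 := by omega
      rw [if_pos h', if_neg (by omega)]; norm_num
    · have h' : ¬ (n + 1) % 2 = 1 := by omega
      rw [if_neg h', if_pos h]; norm_num

/-- Elementary integer fact: `c * y ≤ c ^ 2 * x` when `|y| ≤ x`. -/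
lemma int_quad (c : ℤ) (x y : ℝ) (h0 : 0 ≤ y) (h : y ≤ x) : (c : ℝ) * y ≤ (c : ℝ) ^ 2 * x := by
  have h1 : (c : ℝ) ≤ (c : ℝ) ^ 2 := by exact_mod_cast Int.le_self_sq c
  nlinarith [sq_nonneg (c : ℝ)]

lemma lay1 (dp dq dr : ℝ) (h0 : 0 ≤ dq) (h1 : dq ≤ dp) (h2 : 2 * dp ≤ dr) (B : ℤ) (n : ℕ)
    (hB : B % 2 = (n : ℤ) % 2) :
    (dr + dq - 2 * dp) * (B : ℝ) - dr * (B : ℝ) ^ 2 / 2 ≤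
      (dr - dq) * (g1 n : ℝ) - dr * (g1 n : ℝ) ^ 2 / 2 + 0 := by
  unfold g1
  rcases Int.emod_two_eq_zero_or_one (n : ℤ) with h | h
  · obtain ⟨c, rfl⟩ : ∃ c, B = 2 * c := ⟨B / 2, by omega⟩
    rw [h]; push_cast
    have := int_quad c dr (dr + dq - 2 * dp) (by linarith) (by linarith)
    nlinarith
  · obtain ⟨c, rfl⟩ : ∃ c, B = 2 * c + 1 := ⟨B / 2, by omega⟩
    rw [h]; push_cast
    have := int_quad (-c) dr (2 * dp - dq) (by linarith) (by linarith)
    push_cast at this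
    nlinarith

lemma lay2 (dp dq dr : ℝ) (h0 : 0 ≤ dq) (h1 : dq ≤ dp) (h2 : 2 * dp ≤ dr) (B : ℤ) (n : ℕ)
    (hB : B % 2 = (n : ℤ) % 2) :
    (dr + dq) * (B : ℝ) - dr * (B : ℝ) ^ 2 / 2 ≤
      (dr - dq) * (g1 n : ℝ) - dr * (g1 n : ℝ) ^ 2 / 2 + 2 * dq := by
  unfold g1
  rcases Int.emod_two_eq_zero_or_one (n : ℤ) with h | h
  · obtain ⟨c, rfl⟩ : ∃ c, B = 2 * c := ⟨B / 2, by omega⟩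
    rw [h]; push_cast
    have := int_quad (1 - c) dr (dr - dq) (by linarith) (by linarith)
    push_cast at this
    nlinarith
  · obtain ⟨c, rfl⟩ : ∃ c, B = 2 * c + 1 := ⟨B / 2, by omega⟩
    rw [h]; push_cast
    have := int_quad c dr dq (by linarith) (by linarith)
    nlinarith

lemma lay3 (dp dq dr : ℝ) (h0 : 0 ≤ dq) (h1 : dq ≤ dp) (h2 : 2 * dp ≤ dr) (B : ℤ) (n : ℕ)
    (hB : B % 2 = (n : ℤ) % 2) (hn : n = 0 → dq = 0) :
    (dr - dq) * (B : ℝ) - dr * (B : ℝ) ^ 2 / 2 ≤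
      (dr + dq) * (g2 n : ℝ) - dr * (g2 n : ℝ) ^ 2 / 2 + (-2) * dq := by
  unfold g2
  rcases Int.emod_two_eq_zero_or_one (n : ℤ) with h | h
  · obtain ⟨c, rfl⟩ : ∃ c, B = 2 * c := ⟨B / 2, by omega⟩
    have := int_quad c dr (dr - dq) (by linarith) (by linarith)
    have h' : ¬ n % 2 = 1 := by omega
    split_ifs with h3
    · have := hn h3
      push_cast
      nlinarith
    · push_cast
      nlinarith
  · obtain ⟨c, rfl⟩ : ∃ c, B = 2 * c + 1 := ⟨B / 2, by omega⟩
    have h' : n % 2 = 1 := by omega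
    have h3 : n ≠ 0 := by omega
    rw [if_neg h3, if_pos h']; push_cast
    have := int_quad (-c) dr dq (by linarith) (by linarith)
    push_cast at this
    nlinarith

theorem ukdv_type_bilinear_typeII (N : ℕ) (hN : 1 ≤ N) (p c : Fin N → ℝ)
    (L k l : ℝ) (hp0 : ∀ j, 0 ≤ p j) (hpmono : Monotone p)
    (hL : 0 ≤ L) (hk : 2 ≤ k) (hl : 0 ≤ l)
    (q r : Fin N → ℝ)
    (hq : ∀ j, q j = min (p j) L)
    (hr : ∀ j, r j = k * p j + l * q j)
    (f : ℝ → ℝ → ℝ)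
    (hf : ∀ n i : ℝ, f n i = uperm N fun j m =>
      |(p j * n - q j * i + c j) + (2 * ((m : ℕ) : ℝ) - (N : ℝ) + 1) * r j / 2|) :
    ∀ n i : ℝ,
      f n i + f (n + k) (i - l + 1) =
        max (f (n + k - 1) (i - l) + f (n + 1) (i + 1))
            (f (n + k) (i - l) + f n (i + 1) - 2 * L) := by
  intro n i
  let P : ℕ → ℝ := fun j => if j = 0 then 0 else p ⟨min (j - 1) (N - 1), by omega⟩
  have hP0 : P 0 = 0 := by simp [P]
  have hPj : ∀ j : Fin N, P (j + 1) = p j := by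
    intro j
    simp only [P, Nat.add_eq_zero_iff, one_ne_zero, and_false, if_false]
    congr 1
    apply Fin.ext
    have := j.2
    simp only [Nat.add_sub_cancel]
    omega
  have hPm : Monotone P := by
    intro x y hxy
    simp only [P]
    split_ifs with h1 h2 h2
    · exact le_rfl
    · exact hp0 _
    · omega
    · apply hpmono
      rw [Fin.mk_le_mk]
      omega
  let Q : ℕ → ℝ := fun j => min (P j) L
  have hQ0 : Q 0 = 0 := by simp [Q, hP0, hL]
  have hQj : ∀ j : Fin N, Q (j + 1) = q j := by
    intro j; simp only [Q]; rw [hPj, hq]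
  have hdq : ∀ m, 0 ≤ Q (m + 1) - Q m := by
    intro m
    have := hPm (Nat.le_succ m)
    have : Q m ≤ Q (m + 1) := min_le_min_right L this
    linarith
  have hdqp : ∀ m, Q (m + 1) - Q m ≤ P (m + 1) - P m := by
    intro m
    have := hPm (Nat.le_succ m)
    simp only [Q, Nat.succ_eq_add_one] at *
    rcases min_cases (P m) L with ⟨e, _⟩ | ⟨e, _⟩ <;>
      rcases min_cases (P (m + 1)) L with ⟨e', _⟩ | ⟨e', _⟩ <;> rw [e, e'] <;> linarith
  let R : ℕ → ℝ := fun j => k * P j + l * Q j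
  have hR0 : R 0 = 0 := by simp [R, hP0, hQ0]
  have hRj : ∀ j : Fin N, R (j + 1) = r j := by
    intro j; simp only [R]; rw [hPj, hQj, hr]
  have hdr : ∀ m, 2 * (P (m + 1) - P m) ≤ R (m + 1) - R m := by
    intro m
    have h1 := hdq m
    have h2 := hdqp m
    have h3 := mul_nonneg hl h1
    have h4 := mul_nonneg (sub_nonneg.2 hk) (h1.trans h2)
    simp only [R]; nlinarith
  have hRm : Monotone R := by
    refine monotone_nat_of_le_succ fun m => ?_
    have h1 := hdq m
    have h2 := hdqp m
    have h3 := hdr m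
    linarith
  have hQN : Q N ≤ L := min_le_right _ _
  let C : ℕ → ℝ := fun j => if h : j < N then c ⟨j, h⟩ else 0
  let S : ℝ → ℝ → ℕ → ℝ := fun n i j => P (j + 1) * n - Q (j + 1) * i + C j
  have hfS : ∀ n i, f n i = uperm N fun j m =>
      |S n i j + (2 * ((m : ℕ) : ℝ) - (N : ℝ) + 1) * R (j + 1) / 2| := by
    intro n i
    rw [hf]
    congr 1
    funext j m
    simp only [S]
    rw [hPj, hQj, hRj]
    simp [C]
  have ge : ∀ n i ε, IsSgn ε → KK N R + JJ N R (S n i) ε ≤ f n i := by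
    intro n i ε hε
    rw [hfS]; exact uperm_ge N R hRm hR0 _ ε hε
  have ex : ∀ n i, ∃ ε, IsSgn ε ∧ f n i ≤ KK N R + JJ N R (S n i) ε := by
    intro n i
    rw [hfS]; exact uperm_ex N R hRm hR0 _
  have sumQ : ∑ m ∈ range N, (Q (m + 1) - Q m) = Q N := by
    rw [Finset.sum_range_sub, hQ0, sub_zero]
  -- difference profiles
  have hD1 : ∀ j < N, S (n + k) (i - l + 1) j - S n i j = (fun j => R j - Q j) (j + 1) := by
    intro j _; simp only [S, R]; ring
  have hD2 : ∀ j < N, S (n + k - 1) (i - l) j - S (n + 1) (i + 1) j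
      = (fun j => R j + Q j - 2 * P j) (j + 1) := by
    intro j _; simp only [S, R]; ring
  have hD3 : ∀ j < N, S (n + k) (i - l) j - S n (i + 1) j = (fun j => R j + Q j) (j + 1) := by
    intro j _; simp only [S, R]; ring
  apply le_antisymm
  · obtain ⟨σ, hσ, h1⟩ := ex n i
    obtain ⟨τ, hτ, h2⟩ := ex (n + k) (i - l + 1)
    obtain ⟨a, b, rfl, rfl, hab⟩ := split_signs σ τ hσ hτ
    by_cases hM : ∃ j0 < N, b j0 ≠ 0 ∧ L ≤ P (j0 + 1)
    · obtain ⟨j0, hj0, hb0, hL0⟩ := hM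
      obtain ⟨σ', τ', hσ', hτ', h3⟩ := exchange N R (fun j => R j - Q j) (fun j => R j + Q j)
        (by simp [hR0, hQ0]) (by simp [hR0, hQ0]) (S n i) (S (n + k) (i - l + 1))
        (S n (i + 1)) (S (n + k) (i - l)) hD1 hD3 (by intro j _; simp only [S]; ring)
        a b hab g2 (by simp [g2]) g2_step (fun m => (-2) * (Q (m + 1) - Q m)) (by
          intro m hm B hB
          have := lay3 _ _ _ (hdq m) (hdqp m) (hdr m) B _ hB (by
            intro h0
            have hlt := cnt_zero N b m j0 h0 hj0 hb0
            have e1 : L ≤ P m := hL0.trans (hPm hlt)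
            have e2 : L ≤ P (m + 1) := e1.trans (hPm (Nat.le_succ m))
            simp only [Q]; rw [min_eq_right e1, min_eq_right e2, sub_self])
          linarith)
      rw [← Finset.mul_sum, sumQ] at h3
      have hQL : Q N = L := min_eq_right (hL0.trans (hPm hj0))
      have h4 := ge n (i + 1) _ hσ'
      have h5 := ge (n + k) (i - l) _ hτ'
      refine le_trans ?_ (le_max_right _ _)
      linarith
    · push Not at hM
      refine le_trans ?_ (le_max_left _ _)
      have h4 := ge (n + 1) (i + 1) _ hσ
      have h5 := ge (n + k - 1) (i - l) _ hτ
      have e : ∑ j ∈ range N, ((a j - b j : ℤ) : ℝ) * S n i j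
          + ∑ j ∈ range N, ((a j + b j : ℤ) : ℝ) * S (n + k) (i - l + 1) j
          = ∑ j ∈ range N, ((a j - b j : ℤ) : ℝ) * S (n + 1) (i + 1) j
          + ∑ j ∈ range N, ((a j + b j : ℤ) : ℝ) * S (n + k - 1) (i - l) j := by
        rw [← Finset.sum_add_distrib, ← Finset.sum_add_distrib]
        refine Finset.sum_congr rfl fun j hj => ?_
        by_cases hb : b j = 0
        · simp only [S, hb]; push_cast; ring
        · have := hM j (Finset.mem_range.1 hj) hb
          have e : Q (j + 1) = P (j + 1) := min_eq_left this.le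
          simp only [S]; rw [e]; push_cast; ring
      simp only [JJ] at h1 h2 h4 h5
      linarith
  · apply max_le
    · obtain ⟨τ, hτ, h1⟩ := ex (n + k - 1) (i - l)
      obtain ⟨σ, hσ, h2⟩ := ex (n + 1) (i + 1)
      obtain ⟨a, b, rfl, rfl, hab⟩ := split_signs σ τ hσ hτ
      obtain ⟨σ', τ', hσ', hτ', h3⟩ := exchange N R (fun j => R j + Q j - 2 * P j)
        (fun j => R j - Q j) (by simp [hR0, hQ0, hP0]) (by simp [hR0, hQ0])
        (S (n + 1) (i + 1)) (S (n + k - 1) (i - l)) (S n i) (S (n + k) (i - l + 1))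
        hD2 hD1 (by intro j _; simp only [S]; ring)
        a b hab g1 (by simp [g1]) g1_step (fun m => 0) (by
          intro m hm B hB
          have := lay1 _ _ _ (hdq m) (hdqp m) (hdr m) B _ hB
          linarith)
      rw [Finset.sum_const_zero] at h3
      have h4 := ge n i _ hσ'
      have h5 := ge (n + k) (i - l + 1) _ hτ'
      linarith
    · obtain ⟨τ, hτ, h1⟩ := ex (n + k) (i - l)
      obtain ⟨σ, hσ, h2⟩ := ex n (i + 1)
      obtain ⟨a, b, rfl, rfl, hab⟩ := split_signs σ τ hσ hτ
      obtain ⟨σ', τ', hσ', hτ', h3⟩ := exchange N R (fun j => R j + Q j)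
        (fun j => R j - Q j) (by simp [hR0, hQ0]) (by simp [hR0, hQ0])
        (S n (i + 1)) (S (n + k) (i - l)) (S n i) (S (n + k) (i - l + 1))
        hD3 hD1 (by intro j _; simp only [S]; ring)
        a b hab g1 (by simp [g1]) g1_step (fun m => 2 * (Q (m + 1) - Q m)) (by
          intro m hm B hB
          have := lay2 _ _ _ (hdq m) (hdqp m) (hdr m) B _ hB
          linarith)
      rw [← Finset.mul_sum, sumQ] at h3
      have h4 := ge n i _ hσ'
      have h5 := ge (n + k) (i - l + 1) _ hτ'
      linarith
end

section
/- Let N ≥ 1, let p_1,...,p_N be reals with 0 ≤ p_1 ≤ ... ≤ p_N, let L ≥ 0 and let k, l be real constants with k ≥ 1 and l ≥ 1. Define q_j = max(0, p_j − L), r_j = k·p_j + l·q_j, s_j(n,i) = p_j·n − q_j·i + c_j for arbitrary reals c_j, and the Type II function f̃^n_i equal to the ultradiscrete permanent of the N×N matrix whose (j,m) entry (m = 1,...,N) is |s_j(n,i) + (−N−1+2m)·r_j/2|. Then for all real n, i: f̃^n_i + f̃^{n+k−1}_{i−l−1} = max( f̃^{n+k−1}_{i−l} + f̃^n_{i−1},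 f̃^{n+k}_{i−l} + f̃^{n−1}_{i−1} − 2L ). -/
open Finset

namespace UToda

/-- Tail sums. -/
def T {N : ℕ} (e : Fin N → ℤ) (k : Fin N) : ℤ := ∑ j, if k ≤ j then e j else 0

/-- Shifted extension of `a` to the naturals, with value `0` at `0`. -/
noncomputable def ext {N : ℕ} (a : Fin N → ℝ) (m : ℕ) : ℝ :=
  if h : 0 < m ∧ m - 1 < N then a ⟨m - 1, h.2⟩ else 0

/-- Increments. -/
noncomputable def dl {N : ℕ} (a : Fin N → ℝ) (k : Fin N) : ℝ := ext a (k + 1) - ext a k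

lemma ext_succ {N : ℕ} (a : Fin N → ℝ) (k : Fin N) : ext a (k + 1) = a k := by
  simp [ext]

lemma dl_cases {N : ℕ} (k : Fin N) :
    (∀ a : Fin N → ℝ, dl a k = a k) ∨
      ∃ k' : Fin N, (k' : ℕ) + 1 = k ∧ ∀ a : Fin N → ℝ, dl a k = a k - a k' := by
  rcases Nat.eq_zero_or_pos (k : ℕ) with h | h
  · left
    intro a
    rw [dl, ext_succ, h]
    simp [ext]
  · right
    have hk := k.isLt
    refine ⟨⟨k - 1, by omega⟩, by simp; omega, fun a => ?_⟩
    rw [dl, ext_succ]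
    have h2 : 0 < (k : ℕ) ∧ (k : ℕ) - 1 < N := ⟨h, by omega⟩
    simp only [ext, dif_pos h2]

lemma dl_sum {N : ℕ} (a : Fin N → ℝ) (j : Fin N) :
    ∑ k, (if k ≤ j then dl a k else 0) = a j := by
  have h1 : ∑ k : Fin N, (if k ≤ j then dl a k else 0)
      = ∑ m ∈ range N, if m ≤ (j : ℕ) then ext a (m + 1) - ext a m else 0 := by
    rw [← Fin.sum_univ_eq_sum_range (fun m => if m ≤ (j : ℕ) then ext a (m + 1) - ext a m else 0)]
    rfl
  have h2 : (range N).filter (fun m => m ≤ (j : ℕ)) = range ((j : ℕ) + 1) := by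
    ext m
    have := j.isLt
    simp
    omega
  rw [h1, ← sum_filter, h2, sum_range_sub, ext_succ]
  simp [ext]

lemma lin_T {N : ℕ} (a : Fin N → ℝ) (e : Fin N → ℤ) :
    ∑ j, (e j : ℝ) * a j = ∑ k, dl a k * (T e k : ℝ) := by
  have : ∀ j, (e j : ℝ) * a j = ∑ k, (if k ≤ j then dl a k * (e j : ℝ) else 0) := by
    intro j
    conv_lhs => rw [← dl_sum a j]
    rw [mul_sum]
    refine sum_congr rfl fun k _ => ?_
    split_ifs <;> ring
  rw [sum_congr rfl fun j _ => this j, sum_comm]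
  refine sum_congr rfl fun k _ => ?_
  rw [T]
  push_cast
  rw [mul_sum]
  refine sum_congr rfl fun j _ => ?_
  split_ifs <;> simp

lemma min_sum {N : ℕ} (r : Fin N → ℝ) (hr : Monotone r) (i j : Fin N) :
    min (r i) (r j) = ∑ k, (if k ≤ i then 1 else 0) * (if k ≤ j then 1 else 0) * dl r k := by
  wlog h : i ≤ j generalizing i j
  · rw [min_comm, this j i (le_of_not_ge h)]
    exact sum_congr rfl fun k _ => by ring
  rw [min_eq_left (hr h)]
  conv_lhs => rw [← dl_sum r i]
  refine sum_congr rfl fun k _ => ?_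
  by_cases h1 : k ≤ i
  · simp [h1, h1.trans h]
  · simp [h1]

lemma quad_T {N : ℕ} (r : Fin N → ℝ) (hr : Monotone r) (e : Fin N → ℤ) :
    ∑ i, ∑ j, min (r i) (r j) * ((e i : ℝ) * (e j : ℝ)) = ∑ k, dl r k * (T e k : ℝ) ^ 2 := by
  have h1 : ∀ k, dl r k * (T e k : ℝ) ^ 2 = ∑ i, ∑ j,
      (if k ≤ i then 1 else 0) * (if k ≤ j then 1 else 0) * dl r k * ((e i : ℝ) * (e j : ℝ)) := by
    intro k
    rw [T, sq]
    push_cast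
    rw [sum_mul_sum, mul_sum]
    refine sum_congr rfl fun i _ => ?_
    rw [mul_sum]
    refine sum_congr rfl fun j _ => ?_
    split_ifs <;> simp
  symm
  rw [sum_congr rfl fun k _ => h1 k, sum_comm]
  refine sum_congr rfl fun i _ => ?_
  rw [sum_comm]
  refine sum_congr rfl fun j _ => ?_
  rw [min_sum r hr, sum_mul]

/-- Sign vectors. -/
def IsSgn {N : ℕ} (σ : Fin N → ℤ) : Prop := ∀ j, σ j = 1 ∨ σ j = -1

noncomputable def K {N : ℕ} (r : Fin N → ℝ) : ℝ := (∑ i, ∑ j, max (r i) (r j)) / 4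

noncomputable def val {N : ℕ} (r x : Fin N → ℝ) (σ : Fin N → ℤ) : ℝ :=
  ∑ j, (σ j : ℝ) * x j + K r - (∑ k, dl r k * (T σ k : ℝ) ^ 2) / 4

lemma abs_pm {a b : ℝ} (ha : 0 ≤ a) (hb : 0 ≤ b) {s t : ℤ} (hs : s = 1 ∨ s = -1)
    (ht : t = 1 ∨ t = -1) :
    |(s : ℝ) * a - t * b| = max a b - min a b * (s * t) := by
  rcases le_total a b with h | h <;> rcases hs with rfl | rfl <;> rcases ht with rfl | rfl <;>
    simp only [h, max_eq_left, max_eq_right, min_eq_left, min_eq_right] <;> push_cast <;>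
    first
    | (rw [abs_of_nonneg (by linarith)]; ring)
    | (rw [abs_of_nonpos (by linarith)]; ring)

lemma val_eq {N : ℕ} (r x : Fin N → ℝ) (hr : Monotone r) (hr0 : ∀ j, 0 ≤ r j) (σ : Fin N → ℤ)
    (hσ : IsSgn σ) :
    val r x σ = ∑ j, (σ j : ℝ) * x j + (∑ i, ∑ j, |(σ i : ℝ) * r i - σ j * r j|) / 4 := by
  rw [val, ← quad_T r hr, K]
  have : ∑ i, ∑ j, |(σ i : ℝ) * r i - σ j * r j| = ∑ i, ∑ j, max (r i) (r j) -
      ∑ i, ∑ j, min (r i) (r j) * ((σ i : ℝ) * (σ j : ℝ)) := by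
    rw [← sum_sub_distrib]
    refine sum_congr rfl fun i _ => ?_
    rw [← sum_sub_distrib]
    refine sum_congr rfl fun j _ => ?_
    exact abs_pm (hr0 i) (hr0 j) (hσ i) (hσ j)
  rw [this]
  ring

/-- comparison sign of two elements -/
noncomputable def sg {N : ℕ} (a b : Fin N) : ℝ :=
  (if b < a then 1 else 0) - (if a < b then 1 else 0)

lemma sg_sum {N : ℕ} (a : Fin N) : ∑ b, sg a b = 2 * ((a : ℕ) : ℝ) - N + 1 := by
  have ha := a.isLt
  simp only [sg, sum_sub_distrib, sum_boole]
  have h1 : (univ.filter fun b => b < a) = Iio a := by ext; simp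
  have h2 : (univ.filter fun b => a < b) = Ioi a := by ext; simp
  rw [h1, h2, Fin.card_Iio, Fin.card_Ioi, Nat.sub_sub, Nat.cast_sub (by omega)]
  push_cast
  ring

lemma weight_sum {N : ℕ} (x : Fin N → ℝ) (π : Equiv.Perm (Fin N)) :
    ∑ j, x j * ((2 * ((π j : ℕ) : ℝ) - N + 1) / 2)
      = (∑ i, ∑ j, (x i - x j) * sg (π i) (π j)) / 4 := by
  have h1 : ∀ i, 2 * ((π i : ℕ) : ℝ) - N + 1 = ∑ j, sg (π i) (π j) := by
    intro i
    rw [Equiv.sum_comp π (fun b => sg (π i) b), sg_sum]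
  have h2 : ∑ i, ∑ j, x j * sg (π i) (π j) = - ∑ i, ∑ j, x i * sg (π i) (π j) := by
    rw [sum_comm, ← sum_neg_distrib]
    refine sum_congr rfl fun i _ => ?_
    rw [← sum_neg_distrib]
    refine sum_congr rfl fun j _ => ?_
    simp only [sg]
    ring
  simp only [sub_mul, sum_sub_distrib, h2]
  have h3 : ∑ j, x j * ((2 * ((π j : ℕ) : ℝ) - N + 1) / 2)
      = (∑ i, ∑ j, x i * sg (π i) (π j)) / 2 := by
    rw [sum_div]
    refine sum_congr rfl fun i _ => ?_
    rw [h1, ← mul_sum]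
    ring
  rw [h3]
  ring

lemma weight_le {N : ℕ} (x : Fin N → ℝ) (π : Equiv.Perm (Fin N)) :
    ∑ j, x j * ((2 * ((π j : ℕ) : ℝ) - N + 1) / 2) ≤ (∑ i, ∑ j, |x i - x j|) / 4 := by
  rw [weight_sum]
  gcongr with i _ j _
  simp only [sg]
  have h1 := le_abs_self (x i - x j)
  have h2 := neg_le_abs (x i - x j)
  have h3 := abs_nonneg (x i - x j)
  rcases lt_trichotomy (π i) (π j) with h | h | h
  · simp [h, not_lt_of_gt h]; linarith
  · simp [h]
  · simp [h, not_lt_of_gt h]; linarith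

lemma weight_ex {N : ℕ} (x : Fin N → ℝ) : ∃ π : Equiv.Perm (Fin N),
    ∑ j, x j * ((2 * ((π j : ℕ) : ℝ) - N + 1) / 2) = (∑ i, ∑ j, |x i - x j|) / 4 := by
  refine ⟨(Tuple.sort x)⁻¹, ?_⟩
  rw [weight_sum]
  have hm : ∀ i j, (Tuple.sort x)⁻¹ i ≤ (Tuple.sort x)⁻¹ j → x i ≤ x j := by
    intro i j h
    have := Tuple.monotone_sort x h
    simpa using this
  congr 1
  refine sum_congr rfl fun i _ => sum_congr rfl fun j _ => ?_
  simp only [sg]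
  rcases lt_trichotomy ((Tuple.sort x)⁻¹ i) ((Tuple.sort x)⁻¹ j) with h | h | h
  · have h' := hm _ _ h.le
    rw [abs_of_nonpos (by linarith), if_neg (not_lt_of_gt h), if_pos h]; ring
  · have h' : i = j := (Tuple.sort x)⁻¹.injective h
    subst h'
    simp
  · have h' := hm _ _ h.le
    rw [abs_of_nonneg (by linarith), if_neg (not_lt_of_gt h), if_pos h]; ring

lemma val_le_uperm {N : ℕ} (r x : Fin N → ℝ) (hr : Monotone r) (hr0 : ∀ j, 0 ≤ r j)
    (σ : Fin N → ℤ) (hσ : IsSgn σ) :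
    val r x σ ≤ uperm N fun j m => |x j + (2 * ((m : ℕ) : ℝ) - (N : ℝ) + 1) * r j / 2| := by
  obtain ⟨π, hπ⟩ := weight_ex fun j => (σ j : ℝ) * r j
  rw [val_eq r x hr hr0 σ hσ, ← hπ, ← sum_add_distrib]
  refine le_trans ?_ (Finset.le_sup' _ (mem_univ π))
  refine sum_le_sum fun j _ => ?_
  rcases hσ j with h | h
  · rw [h]
    refine le_trans (le_of_eq ?_) (le_abs_self _)
    push_cast
    ring
  · rw [h]
    refine le_trans (le_of_eq ?_) (neg_le_abs _)
    push_cast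
    ring

lemma uperm_le_val {N : ℕ} (r x : Fin N → ℝ) (hr : Monotone r) (hr0 : ∀ j, 0 ≤ r j) :
    ∃ σ : Fin N → ℤ, IsSgn σ ∧
      (uperm N fun j m => |x j + (2 * ((m : ℕ) : ℝ) - (N : ℝ) + 1) * r j / 2|) ≤ val r x σ := by
  obtain ⟨π, -, hπ⟩ := Finset.exists_mem_eq_sup' (Finset.univ_nonempty)
    (fun π : Equiv.Perm (Fin N) =>
      ∑ j, |x j + (2 * ((π j : ℕ) : ℝ) - (N : ℝ) + 1) * r j / 2|)
  have hs : ∀ j, ∃ s : ℤ, (s = 1 ∨ s = -1) ∧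
      |x j + (2 * ((π j : ℕ) : ℝ) - (N : ℝ) + 1) * r j / 2|
        = s * (x j + (2 * ((π j : ℕ) : ℝ) - (N : ℝ) + 1) * r j / 2) := by
    intro j
    rcases abs_choice (x j + (2 * ((π j : ℕ) : ℝ) - (N : ℝ) + 1) * r j / 2) with h | h
    · exact ⟨1, Or.inl rfl, by rw [h]; simp⟩
    · exact ⟨-1, Or.inr rfl, by rw [h]; simp⟩
  choose σ hσ hσ2 using hs
  refine ⟨σ, hσ, ?_⟩
  rw [val_eq r x hr hr0 σ hσ, uperm, hπ]
  have := weight_le (fun j => (σ j : ℝ) * r j) π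
  refine le_trans (le_of_eq ?_) (add_le_add_right this _)
  rw [← sum_add_distrib]
  refine sum_congr rfl fun j _ => ?_
  rw [hσ2 j]
  ring

/-- `e` takes values in `{-1,0,1}` with support `D`. -/
def Supp {N : ℕ} (D : Fin N → Prop) (e : Fin N → ℤ) : Prop :=
  ∀ j, (D j ∧ (e j = 1 ∨ e j = -1)) ∨ (¬ D j ∧ e j = 0)

lemma T_cons_succ {N : ℕ} (a : ℤ) (e : Fin N → ℤ) (k : Fin N) :
    T (Fin.cons a e : Fin (N + 1) → ℤ) k.succ = T e k := by
  simp [T, Fin.sum_univ_succ]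

lemma T_cons_zero {N : ℕ} (a : ℤ) (e : Fin N → ℤ) :
    T (Fin.cons a e : Fin (N + 1) → ℤ) 0 = a + ∑ j, e j := by
  simp [T, Fin.sum_univ_succ]

lemma ex_alt1 {N : ℕ} (D : Fin N → Prop) : ∃ e : Fin N → ℤ, Supp D e ∧
    (∑ j, e j = 0 ∨ ∑ j, e j = 1) ∧ ∀ k, T e k = 0 ∨ T e k = 1 := by
  induction N with
  | zero => exact ⟨fun _ => 0, fun j => j.elim0, by simp, fun j => j.elim0⟩
  | succ N ih =>
    obtain ⟨e, h1, h2, h3⟩ := ih (fun j => D j.succ)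
    have key : ∃ a : ℤ, ((D 0 ∧ (a = 1 ∨ a = -1)) ∨ (¬ D 0 ∧ a = 0)) ∧
        (a + ∑ j, e j = 0 ∨ a + ∑ j, e j = 1) := by
      by_cases hD : D 0
      · rcases h2 with h | h
        · exact ⟨1, by simp [hD], by simp [h]⟩
        · exact ⟨-1, by simp [hD], by simp [h]⟩
      · exact ⟨0, by simp [hD], by simpa using h2⟩
    obtain ⟨a, ha, hs⟩ := key
    refine ⟨Fin.cons a e, ?_, ?_, ?_⟩
    · intro j
      refine Fin.cases ?_ (fun j => ?_) j
      · simpa using ha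
      · simpa using h1 j
    · simpa [Fin.sum_univ_succ] using hs
    · intro k
      refine Fin.cases ?_ (fun k => ?_) k
      · rw [T_cons_zero]; exact hs
      · rw [T_cons_succ]; exact h3 k

lemma ex_alt2 {N : ℕ} (D : Fin N → Prop) : ∃ e : Fin N → ℤ, Supp D e ∧
    ((∑ j, e j = 1 ∨ ∑ j, e j = 2) ∨ (∑ j, e j = 0 ∧ ∀ j, ¬ D j)) ∧
    ∀ k, (T e k = 1 ∨ T e k = 2) ∨ (T e k = 0 ∧ ∀ j, k ≤ j → ¬ D j) := by
  induction N with
  | zero => exact ⟨fun _ => 0, fun j => j.elim0, Or.inr ⟨by simp, fun j => j.elim0⟩,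
      fun j => j.elim0⟩
  | succ N ih =>
    obtain ⟨e, h1, h2, h3⟩ := ih (fun j => D j.succ)
    have key : ∃ a : ℤ, ((D 0 ∧ (a = 1 ∨ a = -1)) ∨ (¬ D 0 ∧ a = 0)) ∧
        ((a + ∑ j, e j = 1 ∨ a + ∑ j, e j = 2) ∨ (a + ∑ j, e j = 0 ∧ ∀ j, ¬ D j)) := by
      by_cases hD : D 0
      · rcases h2 with (h | h) | h
        · exact ⟨1, by simp [hD], by simp [h]⟩
        · exact ⟨-1, by simp [hD], by simp [h]⟩
        · exact ⟨1, by simp [hD], by simp [h.1]⟩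
      · refine ⟨0, by simp [hD], ?_⟩
        rcases h2 with h | h
        · left; simpa using h
        · right
          refine ⟨by simpa using h.1, fun j => ?_⟩
          refine Fin.cases hD (fun j => h.2 j) j
    obtain ⟨a, ha, hs⟩ := key
    refine ⟨Fin.cons a e, ?_, ?_, ?_⟩
    · intro j
      refine Fin.cases ?_ (fun j => ?_) j
      · simpa using ha
      · simpa using h1 j
    · simpa [Fin.sum_univ_succ] using hs
    · intro k
      refine Fin.cases ?_ (fun k => ?_) k
      · rw [T_cons_zero]
        rcases hs with h | h
        · exact Or.inl h
        · exact Or.inr ⟨h.1, fun j _ => h.2 j⟩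
      · rw [T_cons_succ]
        rcases h3 k with h | h
        · exact Or.inl h
        · refine Or.inr ⟨h.1, fun j => ?_⟩
          refine Fin.cases (fun h0 => ?_) (fun j hj => h.2 j (by simpa using hj)) j
          exact absurd h0 (by simp)

lemma T_parity {N : ℕ} (D : Fin N → Prop) (e e' : Fin N → ℤ) (h : Supp D e) (h' : Supp D e')
    (k : Fin N) : ∃ m : ℤ, T e k = T e' k + 2 * m := by
  have : (2 : ℤ) ∣ T e k - T e' k := by
    rw [T, T, ← sum_sub_distrib]
    refine dvd_sum fun j _ => ?_
    have h1 := h j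
    have h2 := h' j
    split_ifs
    · by_cases hD : D j
      · simp only [hD, true_and, not_true, false_and, or_false] at h1 h2
        omega
      · simp only [hD, false_and, not_false_eq_true, true_and, false_or] at h1 h2
        omega
    · simp
  obtain ⟨m, hm⟩ := this
  exact ⟨m, by linarith⟩

/-- The reduced functional. -/
noncomputable def H {N : ℕ} (r z : Fin N → ℝ) (e : Fin N → ℤ) : ℝ :=
  ∑ j, (e j : ℝ) * z j - (∑ k, dl r k * (T e k : ℝ) ^ 2) / 2

lemma H_eq {N : ℕ} (r z : Fin N → ℝ) (e : Fin N → ℤ) :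
    H r z e = ∑ k, (dl z k * (T e k : ℝ) - dl r k * (T e k : ℝ) ^ 2 / 2) := by
  rw [H, lin_T, sum_sub_distrib, sum_div]

lemma pair_val {N : ℕ} (r x y : Fin N → ℝ) (σ τ al e : Fin N → ℤ)
    (hσ : ∀ j, σ j = al j + e j) (hτ : ∀ j, τ j = al j - e j) :
    val r x σ + val r y τ = H r (fun j => x j - y j) e + H r (fun j => x j + y j) al + 2 * K r := by
  have h1 : ∀ k, T σ k = T al k + T e k := by
    intro k
    rw [T, T, T, ← sum_add_distrib]
    refine sum_congr rfl fun j _ => ?_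
    split_ifs <;> simp [hσ]
  have h2 : ∀ k, T τ k = T al k - T e k := by
    intro k
    rw [T, T, T, ← sum_sub_distrib]
    refine sum_congr rfl fun j _ => ?_
    split_ifs <;> simp [hτ]
  have h3 : ∑ k, dl r k * (T σ k : ℝ) ^ 2 + ∑ k, dl r k * (T τ k : ℝ) ^ 2
      = 2 * ∑ k, dl r k * (T al k : ℝ) ^ 2 + 2 * ∑ k, dl r k * (T e k : ℝ) ^ 2 := by
    rw [mul_sum, mul_sum, ← sum_add_distrib, ← sum_add_distrib]
    refine sum_congr rfl fun k _ => ?_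
    rw [h1, h2]
    push_cast
    ring
  have h4 : ∑ j, (σ j : ℝ) * x j + ∑ j, (τ j : ℝ) * y j
      = ∑ j, (e j : ℝ) * (x j - y j) + ∑ j, (al j : ℝ) * (x j + y j) := by
    rw [← sum_add_distrib, ← sum_add_distrib]
    refine sum_congr rfl fun k _ => ?_
    rw [hσ, hτ]
    push_cast
    ring
  simp only [val, H]
  linarith

/-- Transfer principle. -/
lemma transfer {N : ℕ} (r x y x' y' : Fin N → ℝ) (hxy : ∀ j, x j + y j = x' j + y' j)
    (σ τ : Fin N → ℤ) (hσ : IsSgn σ) (hτ : IsSgn τ) :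
    ∃ e : Fin N → ℤ, Supp (fun j => σ j ≠ τ j) e ∧ ∀ e', Supp (fun j => σ j ≠ τ j) e' →
      ∃ σ' τ', IsSgn σ' ∧ IsSgn τ' ∧
        val r x' σ' + val r y' τ' - (val r x σ + val r y τ) =
          H r (fun j => x' j - y' j) e' - H r (fun j => x j - y j) e := by
  have hc : ∀ j, ∃ al e : ℤ, σ j = al + e ∧ τ j = al - e ∧
      ((al = 0 ∧ (e = 1 ∨ e = -1)) ∨ (e = 0 ∧ (al = 1 ∨ al = -1))) := by
    intro j
    rcases hσ j with h | h <;> rcases hτ j with h' | h' <;> rw [h, h']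
    · exact ⟨1, 0, by simp⟩
    · exact ⟨0, 1, by simp⟩
    · exact ⟨0, -1, by simp⟩
    · exact ⟨-1, 0, by simp⟩
  choose al e h1 h2 h3 using hc
  refine ⟨e, fun j => ?_, fun e' he' => ?_⟩
  · have a1 := h1 j
    have a2 := h2 j
    rcases h3 j with h | h
    · refine Or.inl ⟨?_, h.2⟩
      omega
    · refine Or.inr ⟨?_, h.1⟩
      omega
  · refine ⟨fun j => al j + e' j, fun j => al j - e' j, fun j => ?_, fun j => ?_, ?_⟩
    · have a1 := h3 j
      have a2 := he' j
      have a3 := h1 j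
      have a4 := h2 j
      simp only at a2 ⊢
      omega
    · have a1 := h3 j
      have a2 := he' j
      have a3 := h1 j
      have a4 := h2 j
      simp only at a2 ⊢
      omega
    · rw [pair_val r x y σ τ al e h1 h2, pair_val r x' y' _ _ al e' (fun _ => rfl) (fun _ => rfl)]
      have : (fun j => x j + y j) = fun j => x' j + y' j := funext hxy
      rw [this]
      ring

lemma int_mul {R D : ℝ} (hD : 0 ≤ D) (hR : D ≤ R) (m : ℤ) : 0 ≤ (m : ℝ) * (D + m * R) := by
  rcases le_or_gt 0 m with h | h
  · have : (0 : ℝ) ≤ m := by exact_mod_cast h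
    have hR0 : 0 ≤ R := hD.trans hR
    positivity
  · have h' : (m : ℝ) ≤ -1 := by
      have : m ≤ -1 := by omega
      exact_mod_cast this
    have : D + m * R ≤ 0 := by nlinarith
    nlinarith

lemma pt1 {R D E : ℝ} (hD : 0 ≤ D) (hE : D ≤ E) (hR : E ≤ R) (S S' m : ℤ) (h : S = S' + 2 * m)
    (hS : S' = 0 ∨ S' = 1) :
    (R - E) * (S : ℝ) - R * (S : ℝ) ^ 2 / 2 ≤ (R - D) * (S' : ℝ) - R * (S' : ℝ) ^ 2 / 2 := by
  subst h
  have h1 := int_mul (hD.trans hE) hR m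
  have h2 := int_mul (D := R - E) (R := R) (by linarith) (by linarith) (-m)
  rcases hS with rfl | rfl <;> push_cast at * <;> nlinarith

lemma pt2 {R D : ℝ} (hD : 0 ≤ D) (hR : D ≤ R) (S S' m : ℤ) (h : S = S' + 2 * m)
    (hS : S' = 0 ∨ S' = 1) :
    (R + D) * (S : ℝ) - R * (S : ℝ) ^ 2 / 2
      ≤ (R - D) * (S' : ℝ) - R * (S' : ℝ) ^ 2 / 2 + 2 * D := by
  subst h
  have h1 := int_mul hD hR (-m)
  have h2 := int_mul (D := R - D) (R := R) (by linarith) (by linarith) (m - 1)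
  rcases hS with rfl | rfl <;> push_cast at * <;> nlinarith

lemma pt3 {R D : ℝ} (hD : 0 ≤ D) (hR : D ≤ R) (S S' m : ℤ) (h : S = S' + 2 * m)
    (hS : S' = 1 ∨ S' = 2) :
    (R - D) * (S : ℝ) - R * (S : ℝ) ^ 2 / 2
      ≤ (R + D) * (S' : ℝ) - R * (S' : ℝ) ^ 2 / 2 - 2 * D := by
  subst h
  have h1 := int_mul hD hR m
  have h2 := int_mul (D := R - D) (R := R) (by linarith) (by linarith) (-m - 1)
  have h3 := int_mul hD hR (m + 1)
  rcases hS with rfl | rfl <;> push_cast at * <;> nlinarith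

lemma dl_total {N : ℕ} (hN : 1 ≤ N) (a : Fin N → ℝ) :
    ∑ k, dl a k = a ⟨N - 1, by omega⟩ := by
  rw [← dl_sum a ⟨N - 1, by omega⟩]
  refine sum_congr rfl fun k _ => ?_
  rw [if_pos]
  have := k.isLt
  rw [Fin.le_def]
  simp only
  omega

section main

variable {N : ℕ} (p q r : Fin N → ℝ) (L k l : ℝ)

lemma dl_facts (hp0 : ∀ j, 0 ≤ p j) (hpmono : Monotone p)
    (hL : 0 ≤ L) (hk : 1 ≤ k) (hl : 1 ≤ l)
    (hq : ∀ j, q j = max 0 (p j - L)) (hr : ∀ j, r j = k * p j + l * q j) (i : Fin N) :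
    ∃ R D E : ℝ, 0 ≤ D ∧ D ≤ E ∧ E ≤ R ∧ dl r i = R ∧
      dl (fun j => r j - (p j - q j)) i = R - D ∧
      dl (fun j => r j - (p j + q j)) i = R - E ∧
      dl (fun j => r j + (p j - q j)) i = R + D ∧
      dl (fun j => p j - q j) i = D := by
  have key : ∃ P Q : ℝ, 0 ≤ Q ∧ Q ≤ P ∧ dl r i = k * P + l * Q ∧
      dl (fun j => r j - (p j - q j)) i = k * P + l * Q - (P - Q) ∧
      dl (fun j => r j - (p j + q j)) i = k * P + l * Q - (P + Q) ∧
      dl (fun j => r j + (p j - q j)) i = k * P + l * Q + (P - Q) ∧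
      dl (fun j => p j - q j) i = P - Q := by
    rcases dl_cases i with h | ⟨i', hi, h⟩
    · refine ⟨p i, q i, ?_, ?_, ?_⟩
      · rw [hq]; exact le_max_left _ _
      · rw [hq]; exact max_le (hp0 i) (by linarith)
      · simp [h, hr]
    · have hm : p i' ≤ p i := hpmono (by rw [Fin.le_def]; omega)
      refine ⟨p i - p i', q i - q i', ?_, ?_, ?_⟩
      · rw [hq, hq, sub_nonneg]
        exact max_le_max le_rfl (by linarith)
      · rw [hq, hq]
        rcases max_cases 0 (p i - L) with h1 | h1 <;> rcases max_cases 0 (p i' - L) with h2 | h2 <;>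
          linarith
      · simp only [h, hr]
        refine ⟨?_, ?_, ?_, ?_, ?_⟩ <;> ring
  obtain ⟨P, Q, h1, h2, h3⟩ := key
  refine ⟨k * P + l * Q, P - Q, P + Q, by linarith, by linarith, ?_, h3⟩
  nlinarith [mul_nonneg (sub_nonneg.2 hk) (h1.trans h2), mul_nonneg (sub_nonneg.2 hl) h1]

lemma H1 (hp0 : ∀ j, 0 ≤ p j) (hpmono : Monotone p)
    (hL : 0 ≤ L) (hk : 1 ≤ k) (hl : 1 ≤ l)
    (hq : ∀ j, q j = max 0 (p j - L)) (hr : ∀ j, r j = k * p j + l * q j)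
    (Dm : Fin N → Prop) (e : Fin N → ℤ) (he : Supp Dm e) :
    ∃ e', Supp Dm e' ∧ H r (fun j => r j - (p j + q j)) e ≤ H r (fun j => r j - (p j - q j)) e' := by
  obtain ⟨e', he', -, hT⟩ := ex_alt1 Dm
  refine ⟨e', he', ?_⟩
  rw [H_eq, H_eq]
  refine sum_le_sum fun i _ => ?_
  obtain ⟨R, D, E, h1, h2, h3, h4, h5, h6, h7, h8⟩ :=
    dl_facts p q r L k l hp0 hpmono hL hk hl hq hr i
  rw [h4, h5, h6]
  obtain ⟨m, hm⟩ := T_parity Dm e e' he he' i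
  exact pt1 h1 h2 h3 _ _ m hm (hT i)

lemma H2 (hN : 1 ≤ N) (hp0 : ∀ j, 0 ≤ p j) (hpmono : Monotone p)
    (hL : 0 ≤ L) (hk : 1 ≤ k) (hl : 1 ≤ l)
    (hq : ∀ j, q j = max 0 (p j - L)) (hr : ∀ j, r j = k * p j + l * q j)
    (Dm : Fin N → Prop) (e : Fin N → ℤ) (he : Supp Dm e) :
    ∃ e', Supp Dm e' ∧ H r (fun j => r j + (p j - q j)) e - 2 * L
      ≤ H r (fun j => r j - (p j - q j)) e' := by
  obtain ⟨e', he', -, hT⟩ := ex_alt1 Dm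
  refine ⟨e', he', ?_⟩
  have hd : ∑ i, 2 * dl (fun j => p j - q j) i ≤ 2 * L := by
    rw [← mul_sum, dl_total hN, hq]
    have := le_max_right 0 (p ⟨N - 1, by omega⟩ - L)
    linarith
  have : H r (fun j => r j + (p j - q j)) e
      ≤ H r (fun j => r j - (p j - q j)) e' + ∑ i, 2 * dl (fun j => p j - q j) i := by
    rw [H_eq, H_eq, ← sum_add_distrib]
    refine sum_le_sum fun i _ => ?_
    obtain ⟨R, D, E, h1, h2, h3, h4, h5, h6, h7, h8⟩ :=
      dl_facts p q r L k l hp0 hpmono hL hk hl hq hr i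
    rw [h4, h5, h7, h8]
    obtain ⟨m, hm⟩ := T_parity Dm e e' he he' i
    exact pt2 h1 (h2.trans h3) _ _ m hm (hT i)
  linarith

lemma H3 (hN : 1 ≤ N) (hp0 : ∀ j, 0 ≤ p j) (hpmono : Monotone p)
    (hL : 0 ≤ L) (hk : 1 ≤ k) (hl : 1 ≤ l)
    (hq : ∀ j, q j = max 0 (p j - L)) (hr : ∀ j, r j = k * p j + l * q j)
    (Dm : Fin N → Prop) (e : Fin N → ℤ) (he : Supp Dm e) (j0 : Fin N) (hj0 : Dm j0)
    (hpj : L ≤ p j0) :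
    ∃ e', Supp Dm e' ∧ H r (fun j => r j - (p j - q j)) e
      ≤ H r (fun j => r j + (p j - q j)) e' - 2 * L := by
  obtain ⟨e', he', -, hT⟩ := ex_alt2 Dm
  refine ⟨e', he', ?_⟩
  have hdL : ∀ j, j0 ≤ j → p j - q j = L := by
    intro j hj
    have := hpmono hj
    rw [hq, max_eq_right (by linarith)]
    ring
  have hd : ∑ i, 2 * dl (fun j => p j - q j) i = 2 * L := by
    rw [← mul_sum, dl_total hN, hdL]
    have := j0.isLt
    rw [Fin.le_def]
    simp only
    omega
  have : H r (fun j => r j - (p j - q j)) e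
      ≤ H r (fun j => r j + (p j - q j)) e' - ∑ i, 2 * dl (fun j => p j - q j) i := by
    rw [H_eq, H_eq, ← sum_sub_distrib]
    refine sum_le_sum fun i _ => ?_
    obtain ⟨R, D, E, h1, h2, h3, h4, h5, h6, h7, h8⟩ :=
      dl_facts p q r L k l hp0 hpmono hL hk hl hq hr i
    rcases hT i with h | ⟨h, h'⟩
    · rw [h4, h5, h7, h8]
      obtain ⟨m, hm⟩ := T_parity Dm e e' he he' i
      exact pt3 h1 (h2.trans h3) _ _ m hm h
    · have hlt : j0 < i := by
        by_contra hc
        exact h' j0 (not_lt.1 hc) hj0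
      have hz : T e i = 0 := by
        rw [T]
        refine sum_eq_zero fun j _ => ?_
        split_ifs with hij
        · rcases he j with hh | hh
          · exact absurd hh.1 (h' j hij)
          · exact hh.2
        · rfl
      have hD0 : dl (fun j => p j - q j) i = 0 := by
        rcases dl_cases i with h0 | ⟨i', hi, h0⟩
        · have h10 := h0 (fun _ => (1 : ℝ))
          rw [dl, ext_succ] at h10
          have hpos : 0 < (i : ℕ) ∧ (i : ℕ) - 1 < N := by
            have := i.isLt
            rw [Fin.lt_def] at hlt
            omega
          simp [ext, dif_pos hpos] at h10
        · rw [h0, hdL i hlt.le, hdL i']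
          · ring
          · rw [Fin.lt_def] at hlt
            rw [Fin.le_def]
            omega
      rw [hz, h, hD0]
      simp
  linarith

end main

end UToda

theorem utoda_type_bilinear_typeII (N : ℕ) (hN : 1 ≤ N) (p c : Fin N → ℝ)
    (L k l : ℝ) (hp0 : ∀ j, 0 ≤ p j) (hpmono : Monotone p)
    (hL : 0 ≤ L) (hk : 1 ≤ k) (hl : 1 ≤ l)
    (q r : Fin N → ℝ)
    (hq : ∀ j, q j = max 0 (p j - L))
    (hr : ∀ j, r j = k * p j + l * q j)
    (f : ℝ → ℝ → ℝ)
    (hf : ∀ n i : ℝ, f n i = uperm N fun j m =>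
      |(p j * n - q j * i + c j) + (2 * ((m : ℕ) : ℝ) - (N : ℝ) + 1) * r j / 2|) :
    ∀ n i : ℝ,
      f n i + f (n + k - 1) (i - l - 1) =
        max (f (n + k - 1) (i - l) + f n (i - 1))
            (f (n + k) (i - l) + f (n - 1) (i - 1) - 2 * L) := by
  intro n i
  have hq0 : ∀ j, 0 ≤ q j := fun j => by rw [hq]; exact le_max_left _ _
  have hr0 : ∀ j, 0 ≤ r j := fun j => by
    have := hp0 j
    have := hq0 j
    rw [hr]
    positivity
  have hrm : Monotone r := by
    intro a b hab
    have h1 := hpmono hab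
    have h2 : q a ≤ q b := by
      rw [hq, hq]
      exact max_le_max le_rfl (by linarith)
    rw [hr, hr]
    gcongr
  let x : ℝ → ℝ → Fin N → ℝ := fun n i j => p j * n - q j * i + c j
  have hge : ∀ n i σ, UToda.IsSgn σ → UToda.val r (x n i) σ ≤ f n i := by
    intro n i σ hσ
    rw [hf]
    exact UToda.val_le_uperm r (x n i) hrm hr0 σ hσ
  have hle : ∀ n i, ∃ σ, UToda.IsSgn σ ∧ f n i ≤ UToda.val r (x n i) σ := by
    intro n i
    rw [hf]
    exact UToda.uperm_le_val r (x n i) hrm hr0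
  have z1 : (fun j => x (n + k - 1) (i - l - 1) j - x n i j) = fun j => r j - (p j - q j) := by
    funext j; simp only [x, hr]; ring
  have z2 : (fun j => x (n + k - 1) (i - l) j - x n (i - 1) j) = fun j => r j - (p j + q j) := by
    funext j; simp only [x, hr]; ring
  have z3 : (fun j => x (n + k) (i - l) j - x (n - 1) (i - 1) j) = fun j => r j + (p j - q j) := by
    funext j; simp only [x, hr]; ring
  apply le_antisymm
  · obtain ⟨τ, hτ, hτ'⟩ := hle n i
    obtain ⟨σ, hσ, hσ'⟩ := hle (n + k - 1) (i - l - 1)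
    by_cases hcase : ∃ j0, σ j0 ≠ τ j0 ∧ L ≤ p j0
    · obtain ⟨j0, hj0, hpj⟩ := hcase
      obtain ⟨e, he, hD⟩ := UToda.transfer r (x (n + k - 1) (i - l - 1)) (x n i)
        (x (n + k) (i - l)) (x (n - 1) (i - 1)) (fun j => by simp only [x]; ring) σ τ hσ hτ
      obtain ⟨e', he', hH⟩ :=
        UToda.H3 p q r L k l hN hp0 hpmono hL hk hl hq hr _ e he j0 hj0 hpj
      obtain ⟨σ', τ', hs, ht, hv⟩ := hD e' he'
      rw [z1, z3] at hv
      have h1 := hge (n + k) (i - l) σ' hs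
      have h2 := hge (n - 1) (i - 1) τ' ht
      refine le_trans ?_ (le_max_right _ _)
      linarith
    · obtain ⟨e, he, hD⟩ := UToda.transfer r (x (n + k - 1) (i - l - 1)) (x n i)
        (x (n + k - 1) (i - l)) (x n (i - 1)) (fun j => by simp only [x]; ring) σ τ hσ hτ
      obtain ⟨σ', τ', hs, ht, hv⟩ := hD e he
      have hH : UToda.H r (fun j => r j - (p j + q j)) e
          = UToda.H r (fun j => r j - (p j - q j)) e := by
        rw [UToda.H, UToda.H]
        congr 1
        refine sum_congr rfl fun j _ => ?_
        rcases he j with h | h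
        · have hpj : p j < L := by
            by_contra hc
            exact hcase ⟨j, h.1, not_lt.1 hc⟩
          rw [hq, max_eq_left (by linarith)]
          ring
        · rw [h.2]
          simp
      rw [z1, z2] at hv
      have h1 := hge (n + k - 1) (i - l) σ' hs
      have h2 := hge n (i - 1) τ' ht
      refine le_trans ?_ (le_max_left _ _)
      linarith
  · apply max_le
    · obtain ⟨σ, hσ, hσ'⟩ := hle (n + k - 1) (i - l)
      obtain ⟨τ, hτ, hτ'⟩ := hle n (i - 1)
      obtain ⟨e, he, hD⟩ := UToda.transfer r (x (n + k - 1) (i - l)) (x n (i - 1))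
        (x (n + k - 1) (i - l - 1)) (x n i) (fun j => by simp only [x]; ring) σ τ hσ hτ
      obtain ⟨e', he', hH⟩ := UToda.H1 p q r L k l hp0 hpmono hL hk hl hq hr _ e he
      obtain ⟨σ', τ', hs, ht, hv⟩ := hD e' he'
      rw [z1, z2] at hv
      have h1 := hge (n + k - 1) (i - l - 1) σ' hs
      have h2 := hge n i τ' ht
      linarith
    · obtain ⟨σ, hσ, hσ'⟩ := hle (n + k) (i - l)
      obtain ⟨τ, hτ, hτ'⟩ := hle (n - 1) (i - 1)
      obtain ⟨e, he, hD⟩ := UToda.transfer r (x (n + k) (i - l)) (x (n - 1) (i - 1))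
        (x (n + k - 1) (i - l - 1)) (x n i) (fun j => by simp only [x]; ring) σ τ hσ hτ
      obtain ⟨e', he', hH⟩ := UToda.H2 p q r L k l hN hp0 hpmono hL hk hl hq hr _ e he
      obtain ⟨σ', τ', hs, ht, hv⟩ := hD e' he'
      rw [z1, z3] at hv
      have h1 := hge (n + k - 1) (i - l - 1) σ' hs
      have h2 := hge n i τ' ht
      linarith
end
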